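/- arXiv:math/0501243 — 4 statements merged into one kernel-verified Lean document; each statement's English description precedes it below -/
import Mathlib

section
/- Let E be a field and L a finite extension of E which is the compositum of intermediate extensions L₁ and L₂ of relatively prime degrees over E. Then the quotient group E*/N(L/E) is isomorphic to the direct product (E*/N(L₁/E)) × (E*/N(L₂/E)). -/
/-- The norm group `N(L/E)`: the image of the norm map `L* → E*`, as a subgroup of `Eˣ`. -/
noncomputable def normGroup (E L : Type*) [Field E] [Field L] [Algebra E L] : Subgroup Eˣ :=
  (Units.map (Algebra.norm E : L →* E)).range

theorem normGroup_le_of_intermediate {E L : Type*} [Field E] [Field L] [Algebra E L]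
    [FiniteDimensional E L] (K : IntermediateField E L) : normGroup E L ≤ normGroup E K := by
  rintro _ ⟨x, rfl⟩
  refine ⟨Units.map (Algebra.norm K : L →* K) x, ?_⟩
  ext
  simp [Algebra.norm_norm]

theorem pow_mem_normGroup_of_intermediate {E L : Type*} [Field E] [Field L] [Algebra E L]
    [FiniteDimensional E L] (K : IntermediateField E L) (a : Eˣ) (ha : a ∈ normGroup E K) :
    a ^ Module.finrank K L ∈ normGroup E L := by
  obtain ⟨x, rfl⟩ := ha
  refine ⟨Units.map (algebraMap K L : K →* L) x, ?_⟩
  ext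
  have h := Algebra.norm_norm (R := E) (S := K) (A := L) (a := algebraMap K L x)
  rw [Algebra.norm_algebraMap, map_pow] at h
  simpa using h.symm

theorem pow_finrank_mem_normGroup {E K : Type*} [Field E] [Field K] [Algebra E K]
    (a : Eˣ) : a ^ Module.finrank E K ∈ normGroup E K := by
  refine ⟨Units.map (algebraMap E K : E →* K) a, ?_⟩
  ext
  simp [Algebra.norm_algebraMap]

theorem mem_of_pow_mem_coprime {G : Type*} [Group G] (H : Subgroup G) {m n : ℕ}
    (h : Nat.Coprime m n) (a : G) (hm : a ^ m ∈ H) (hn : a ^ n ∈ H) : a ∈ H := by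
  have e : a = (a ^ m) ^ (Nat.gcdA m n) * (a ^ n) ^ (Nat.gcdB m n) := by
    have := Nat.gcd_eq_gcd_ab m n
    rw [h.gcd_eq_one] at this
    rw [← zpow_natCast, ← zpow_natCast, ← zpow_mul, ← zpow_mul, ← zpow_add, ← this]
    simp
  rw [e]
  exact H.mul_mem (H.zpow_mem hm _) (H.zpow_mem hn _)

theorem quotient_mulEquiv_prod {G : Type*} [CommGroup G] (N H K : Subgroup G)
    (hN : N = H ⊓ K) (htop : ∀ c : G, c ∈ H ⊔ K) :
    Nonempty ((G ⧸ N) ≃* (G ⧸ H) × (G ⧸ K)) := by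
  let f : G →* (G ⧸ H) × (G ⧸ K) := (QuotientGroup.mk' H).prod (QuotientGroup.mk' K)
  have hker : N = f.ker := by
    rw [MonoidHom.ker_prod, QuotientGroup.ker_mk', QuotientGroup.ker_mk', hN]
  have hsurj : Function.Surjective f := by
    rintro ⟨a, b⟩
    obtain ⟨a, rfl⟩ := QuotientGroup.mk_surjective a
    obtain ⟨b, rfl⟩ := QuotientGroup.mk_surjective b
    obtain ⟨u, hu, v, hv, huv⟩ := Subgroup.mem_sup.1 (htop (a⁻¹ * b))
    refine ⟨a * u, Prod.ext ?_ ?_⟩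
    · exact (QuotientGroup.eq.2 (by simpa using hu)).symm
    · refine QuotientGroup.eq.2 ?_
      have : (a * u)⁻¹ * b = v := by
        rw [mul_inv_rev, mul_assoc, ← huv]; simp
      rw [this]; exact hv
  exact ⟨(QuotientGroup.quotientMulEquivOfEq hker).trans
    (QuotientGroup.quotientKerEquivOfSurjective f hsurj)⟩

theorem stmt_2 {E L : Type*} [Field E] [Field L] [Algebra E L] [FiniteDimensional E L]
    (L₁ L₂ : IntermediateField E L) (hcomp : L₁ ⊔ L₂ = ⊤)
    (hcop : Nat.Coprime (Module.finrank E L₁) (Module.finrank E L₂)) :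
    Nonempty ((Eˣ ⧸ normGroup E L) ≃*
      (Eˣ ⧸ normGroup E L₁) × (Eˣ ⧸ normGroup E L₂)) := by
  have hfin : Module.finrank E L = Module.finrank E L₁ * Module.finrank E L₂ := by
    have h := (IntermediateField.LinearDisjoint.of_finrank_coprime hcop).finrank_sup
    rwa [hcomp, IntermediateField.finrank_top'] at h
  have h1 : Module.finrank L₁ L = Module.finrank E L₂ := by
    have := Module.finrank_mul_finrank E L₁ L
    rw [hfin] at this
    exact Nat.eq_of_mul_eq_mul_left Module.finrank_pos this
  have h2 : Module.finrank L₂ L = Module.finrank E L₁ := by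
    have := Module.finrank_mul_finrank E L₂ L
    rw [hfin, mul_comm (Module.finrank E L₁)] at this
    exact Nat.eq_of_mul_eq_mul_left Module.finrank_pos this
  have hker : normGroup E L = normGroup E L₁ ⊓ normGroup E L₂ := by
    apply le_antisymm
    · exact le_inf (normGroup_le_of_intermediate L₁) (normGroup_le_of_intermediate L₂)
    · rintro a ⟨ha1, ha2⟩
      have p1 := pow_mem_normGroup_of_intermediate L₁ a ha1
      have p2 := pow_mem_normGroup_of_intermediate L₂ a ha2
      rw [h1] at p1
      rw [h2] at p2
      exact mem_of_pow_mem_coprime _ hcop a p2 p1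
  have htop (c : Eˣ) : c ∈ normGroup E L₁ ⊔ normGroup E L₂ :=
    mem_of_pow_mem_coprime _ hcop c
      (Subgroup.mem_sup_left (pow_finrank_mem_normGroup c))
      (Subgroup.mem_sup_right (pow_finrank_mem_normGroup c))
  exact quotient_mulEquiv_prod _ _ _ hker htop
end

section
/- Let G be a nontrivial finite group all of whose Sylow subgroups are cyclic, H a subgroup of G of order n, and n₁ a positive integer dividing |G| and divisible by n. Then G possesses a subgroup H₁ of order n₁ with H ⊆ H₁. -/
open Pointwise in
/-- A subgroup meeting a normal abelian Hall subgroup `A` trivially lies in a complement of `A`. -/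
theorem aux_complement {L : Type*} [Group L] [Finite L] (A H : Subgroup L) [A.Normal]
    [IsMulCommutative A] (hA : (Nat.card A).Coprime A.index) (hd : H ⊓ A = ⊥) :
    ∃ C : Subgroup L, Subgroup.IsComplement' A C ∧ H ≤ C := by
  obtain ⟨R, hR, -⟩ := Subgroup.exists_isComplement_left (H ⊔ A) 1
  have hT : Subgroup.IsComplement (R * (H : Set L)) (A : Set L) := by
    rw [Subgroup.isComplement_iff_existsUnique_inv_mul_mem] at hR ⊢
    intro g
    obtain ⟨⟨r, hr⟩, hrg, hu⟩ := hR g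
    obtain ⟨h, hh, a, ha, hha⟩ := Subgroup.mem_sup_of_normal_right.1 hrg
    refine ⟨⟨r * h, Set.mul_mem_mul hr hh⟩, ?_, ?_⟩
    · have : (r * h)⁻¹ * g = a := by
        rw [mul_inv_rev, mul_assoc, inv_mul_eq_iff_eq_mul]; exact hha.symm
      show (r * h)⁻¹ * g ∈ A
      rw [this]; exact ha
    · rintro ⟨x, r', hr', h', hh', rfl⟩ hx
      replace hx : (r' * h')⁻¹ * g ∈ A := hx
      have h1 : r'⁻¹ * g ∈ H ⊔ A := by
        have : r'⁻¹ * g = h' * ((r' * h')⁻¹ * g) := by group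
        rw [this]
        exact mul_mem (Subgroup.mem_sup_left hh') (Subgroup.mem_sup_right hx)
      have h2 := hu ⟨r', hr'⟩ h1
      have h2 : r' = r := congrArg Subtype.val h2
      subst h2
      have h3 : h⁻¹ * h' ∈ H ⊓ A := by
        refine ⟨H.mul_mem (H.inv_mem hh) hh', ?_⟩
        have : h⁻¹ * h' = a * ((r' * h')⁻¹ * g)⁻¹ := by
          have : g = r' * (h * a) := by rw [hha]; simp
          rw [this]; group
        rw [this]
        exact A.mul_mem ha (A.inv_mem hx)
      rw [hd, Subgroup.mem_bot, inv_mul_eq_one] at h3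
      simp [h3]
  let T : A.LeftTransversal := ⟨_, hT⟩
  let α : A.QuotientDiff := Quotient.mk'' T
  refine ⟨MulAction.stabilizer L α, Subgroup.isComplement'_stabilizer_of_coprime hA, ?_⟩
  intro h hh
  rw [MulAction.mem_stabilizer_iff]
  refine congrArg Quotient.mk'' (?_ : MulOpposite.op h⁻¹ • T = T)
  apply Subtype.ext
  change MulOpposite.op h⁻¹ • (R * (H : Set L)) = R * (H : Set L)
  ext x
  rw [Set.mem_smul_set]
  constructor
  · rintro ⟨_, ⟨r, hr, k, hk, rfl⟩, rfl⟩
    exact ⟨r, hr, k * h⁻¹, mul_mem hk (inv_mem hh), by simp [mul_assoc]⟩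
  · rintro ⟨r, hr, k, hk, rfl⟩
    exact ⟨r * (k * h), ⟨r, hr, k * h, mul_mem hk hh, rfl⟩, by simp [mul_assoc]⟩

/-- In a cyclic subgroup, the `d`-torsion forms a subgroup of order `d` if `d` divides the order. -/
theorem aux_cyclic {L : Type*} [Group L] [Finite L] (C : Subgroup L) [hC : IsCyclic C] (d : ℕ)
    (hdv : d ∣ Nat.card C) :
    ∃ K : Subgroup L, Nat.card K = d ∧ ∀ x, x ∈ K ↔ x ∈ C ∧ x ^ d = 1 := by
  let _ : CommGroup C := IsCyclic.commGroup
  refine ⟨(powMonoidHom d : C →* C).ker.map C.subtype, ?_, ?_⟩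
  · rw [Subgroup.card_map_of_injective C.subtype_injective, IsCyclic.card_powMonoidHom_ker,
      Nat.gcd_eq_right hdv]
  · intro x
    simp only [Subgroup.mem_map, MonoidHom.mem_ker, powMonoidHom_apply]
    constructor
    · rintro ⟨y, hy, rfl⟩
      exact ⟨y.2, by simpa using congrArg Subtype.val hy⟩
    · rintro ⟨hx, h⟩
      exact ⟨⟨x, hx⟩, Subtype.ext h, rfl⟩

theorem stmt_11 {G : Type*} [Group G] [Finite G] [Nontrivial G]
    (hcyc : ∀ (p : ℕ), p.Prime → ∀ S : Sylow p G, IsCyclic S)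
    (H : Subgroup G) (n n₁ : ℕ) (hn : Nat.card H = n)
    (hn₁pos : 0 < n₁) (hn₁dvd : n₁ ∣ Nat.card G) (hndvd : n ∣ n₁) :
    ∃ H₁ : Subgroup G, Nat.card H₁ = n₁ ∧ H ≤ H₁ := by
  have hZ : IsZGroup G := ⟨hcyc⟩
  have hco := IsZGroup.coprime_commutator_index G
  have hNc := IsZGroup.isCyclic_commutator G
  have hmul := (commutator G).card_mul_index
  obtain ⟨M, hMcard, hM⟩ := aux_cyclic (commutator G) (n₁.gcd (Nat.card (commutator G)))
    (Nat.gcd_dvd_right _ _)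
  have hMn : M.Normal := by
    refine ⟨fun x hx g ↦ ?_⟩
    rw [hM] at hx ⊢
    refine ⟨Subgroup.Normal.conj_mem inferInstance _ hx.1 g, ?_⟩
    rw [conj_pow, hx.2]; simp
  have hMN : M ≤ commutator G := fun x hx ↦ ((hM x).1 hx).1
  let π := QuotientGroup.mk' M
  have hπ : Function.Surjective π := QuotientGroup.mk'_surjective M
  have hker : π.ker = M := QuotientGroup.ker_mk' M
  let A := (commutator G).map π
  have : A.Normal := Subgroup.Normal.map inferInstance π hπ
  have hAc : IsCyclic A := isCyclic_of_surjective _ (π.subgroupMap_surjective (commutator G))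
  have : IsMulCommutative A := inferInstance
  have hAi : A.index = (commutator G).index := by
    rw [Subgroup.index_map, MonoidHom.range_eq_top.2 hπ, Subgroup.index_top, mul_one, hker, sup_eq_left.2 hMN]
  have hAco : (Nat.card A).Coprime A.index := by
    rw [hAi]
    exact hco.coprime_dvd_left (Subgroup.card_map_dvd _ _)
  have hdis : H.map π ⊓ A = ⊥ := by
    rw [eq_bot_iff]
    rintro _ ⟨⟨x, hx, rfl⟩, ⟨y, hy, hxy⟩⟩
    have h1 : y⁻¹ * x ∈ M := QuotientGroup.eq.1 hxy
    have hxN : x ∈ commutator G := by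
      have := mul_mem hy (hMN h1)
      simpa using this
    rw [Subgroup.mem_bot, ← MonoidHom.mem_ker, hker, hM]
    refine ⟨hxN, ?_⟩
    rw [← orderOf_dvd_iff_pow_eq_one]
    exact Nat.dvd_gcd ((hn ▸ Subgroup.orderOf_dvd_natCard H hx).trans hndvd)
      (Subgroup.orderOf_dvd_natCard _ hxN)
  obtain ⟨C, hC, hHC⟩ := aux_complement A (H.map π) hAco hdis
  have hCcard : Nat.card C = (commutator G).index := by rw [← hAi, hC.symm.index_eq_card]
  have hCc : IsCyclic C := by
    have h1 : IsCyclic (G ⧸ commutator G) := IsZGroup.isCyclic_abelianization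
    have hle : commutator G ≤ A.comap π := Subgroup.le_comap_map _ _
    have h2 : IsCyclic ((G ⧸ M) ⧸ A) :=
      isCyclic_of_surjective (QuotientGroup.map (commutator G) A π hle)
        (QuotientGroup.map_surjective_of_surjective _ _ _
          ((QuotientGroup.mk'_surjective A).comp hπ) hle)
    exact isCyclic_of_surjective _ hC.symm.QuotientMulEquiv.surjective
  obtain ⟨K, hKcard, hK⟩ := aux_cyclic C (n₁.gcd (commutator G).index)
    (hCcard ▸ Nat.gcd_dvd_right _ _)
  refine ⟨K.comap π, ?_, ?_⟩
  · have h1 : Nat.card (K.comap π) = Nat.card M * Nat.card K := by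
      have e1 := (K.comap π).card_mul_index
      rw [Subgroup.index_comap_of_surjective K hπ] at e1
      have e2 := K.card_mul_index
      have e3 : Nat.card M * Nat.card (G ⧸ M) = Nat.card G := M.card_mul_index
      have : 0 < K.index := Nat.pos_of_ne_zero Subgroup.index_ne_zero_of_finite
      apply Nat.eq_of_mul_eq_mul_right this
      rw [e1, mul_assoc, e2, e3]
    rw [h1, hMcard, hKcard, ← Nat.Coprime.gcd_mul _ hco, hmul, Nat.gcd_eq_left hn₁dvd]
  · rw [← Subgroup.map_le_iff_le_comap]
    intro x hx
    rw [hK]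
    refine ⟨hHC hx, ?_⟩
    rw [← orderOf_dvd_iff_pow_eq_one]
    refine Nat.dvd_gcd ?_ (hCcard ▸ Subgroup.orderOf_dvd_natCard C (hHC hx))
    exact ((Subgroup.orderOf_dvd_natCard _ hx).trans (Subgroup.card_map_dvd _ _)).trans (hn ▸ hndvd)
end

section
/- Let E be a field and suppose that for some prime p the Brauer group p-primary component Br(E')_p is trivial for every algebraic extension E' of E. Then for any pair of finite separable extensions E₁ ⊆ E₂ of E, the exponent of the group E₁*/N(E₂/E₁) is not divisible by p. -/
universe u

/-- `Br(F)_p = 0`, expressed as: every finite-dimensional central division algebra over `F`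
of `p`-power dimension is trivial. -/
def BrauerPComponentTrivial (F : Type u) [Field F] (p : ℕ) : Prop :=
  ∀ (D : Type u) [DivisionRing D] [Algebra F D], Algebra.IsCentral F D →
    FiniteDimensional F D → (∃ k : ℕ, Module.finrank F D = p ^ k) →
      Module.finrank F D = 1

theorem det_semilinear {L W : Type*} [Field L] [AddCommGroup W] [Module L W]
    [FiniteDimensional L W] (σ : L →+* L) (τ : W →ₛₗ[σ] W) (n : ℕ) (a : L)
    (h : ∀ w, τ^[n] w = a • w) :
    ∃ d : L, ∏ i ∈ Finset.range n, σ^[i] d = a ^ Module.finrank L W := by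
  classical
  let b := Module.finBasis L W
  let T : Matrix (Fin (Module.finrank L W)) (Fin (Module.finrank L W)) L :=
    Matrix.of fun i j => b.repr (τ (b j)) i
  have hT : ∀ j, τ (b j) = ∑ i, T i j • b i := fun j => (b.sum_repr (τ (b j))).symm
  have key : ∀ m : ℕ, ∃ M : Matrix (Fin (Module.finrank L W)) (Fin (Module.finrank L W)) L,
      (∀ j, τ^[m] (b j) = ∑ i, M i j • b i) ∧
        M.det = ∏ i ∈ Finset.range m, σ^[i] T.det := by
    intro m
    induction m with
    | zero =>
      refine ⟨1, fun j => ?_, by simp⟩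
      simp [Matrix.one_apply]
    | succ m ih =>
      obtain ⟨M, hM, hd⟩ := ih
      refine ⟨T * M.map σ, fun j => ?_, ?_⟩
      · rw [Function.iterate_succ_apply', hM, map_sum]
        simp_rw [map_smulₛₗ, hT, Finset.smul_sum, Matrix.mul_apply, Finset.sum_smul, smul_smul]
        rw [Finset.sum_comm]
        simp [mul_comm]
      · rw [Matrix.det_mul, Finset.prod_range_succ']
        have : (M.map σ).det = σ M.det := by
          rw [RingHom.map_det]; rfl
        rw [this, hd, map_prod, mul_comm]
        simp only [Function.iterate_succ_apply']
        simp
  obtain ⟨M, hM, hd⟩ := key n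
  refine ⟨T.det, ?_⟩
  have : M = a • 1 := by
    ext i j
    have h1 := hM j
    rw [h] at h1
    have h2 := congrArg (fun w => b.repr w i) h1
    simp [Finsupp.single_apply] at h2
    simp [Matrix.one_apply, ← h2, eq_comm]
  rw [← hd, this]
  simp

/-- Endomorphisms commuting with a semilinear map. -/
def commAlg {F L V : Type*} [Field F] [Field L] [Algebra F L] [AddCommGroup V] [Module L V]
    [Module F V] [IsScalarTower F L V] (σ : L →ₐ[F] L) (τ : V →ₛₗ[(σ : L →+* L)] V) :
    Subalgebra F (Module.End L V) where
  carrier := {f | ∀ v, f (τ v) = τ (f v)}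
  mul_mem' := by
    intro f g hf hg v
    simp only [Set.mem_ofPred_eq] at hf hg
    simp [hg, hf]
  add_mem' := by
    intro f g hf hg v
    simp only [Set.mem_ofPred_eq] at hf hg
    simp [hg, hf]
  algebraMap_mem' := by
    intro r v
    change r • τ v = τ (r • v)
    rw [← algebraMap_smul L r (τ v), ← algebraMap_smul L r v, map_smulₛₗ]
    simp

section
variable {F L V : Type u} [Field F] [Field L] [Algebra F L] [AddCommGroup V] [Module L V]
    [Module F V] [IsScalarTower F L V] (σ : L →ₐ[F] L) (τ : V →ₛₗ[(σ : L →+* L)] V)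

theorem mem_commAlg {f : Module.End L V} : f ∈ commAlg σ τ ↔ ∀ v, f (τ v) = τ (f v) := Iff.rfl

theorem commAlg_iter {f : Module.End L V} (hf : f ∈ commAlg σ τ) (n : ℕ) (v : V) :
    f (τ^[n] v) = τ^[n] (f v) := by
  induction n with
  | zero => rfl
  | succ n ih => rw [Function.iterate_succ_apply', Function.iterate_succ_apply', hf, ih]

variable {σ τ}

theorem commAlg_exists {p : ℕ} (hp : 0 < p) (b : Module.Basis (Fin p) L V) (v₀ : V)
    (hb : ∀ i, b i = τ^[i] v₀) (a : L) (ha : ∀ v, τ^[p] v = a • v) (w : V) :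
    ∃ f ∈ commAlg σ τ, f v₀ = w := by
  let f : Module.End L V := b.constr ℕ (fun i => τ^[i] w)
  have hf : ∀ i : ℕ, i < p → f (τ^[i] v₀) = τ^[i] w := by
    intro i hi
    have := b.constr_basis ℕ (fun i : Fin p => τ^[i] w) ⟨i, hi⟩
    rwa [hb] at this
  have h0 : f v₀ = w := hf 0 hp
  have hf' : ∀ i : ℕ, i ≤ p → f (τ^[i] v₀) = τ^[i] w := by
    intro i hi
    rcases hi.lt_or_eq with hi | rfl
    · exact hf i hi
    · rw [ha, ha, map_smul, h0]
  refine ⟨f, ?_, h0⟩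
  have : f.comp τ = τ.comp f := by
    refine b.ext fun i => ?_
    simp only [LinearMap.comp_apply]
    rw [hb, hf i i.2, ← Function.iterate_succ_apply' τ, ← Function.iterate_succ_apply' τ,
      hf' _ i.2]
  exact fun v => LinearMap.congr_fun this v

theorem commAlg_ext {p : ℕ} (b : Module.Basis (Fin p) L V) (v₀ : V)
    (hb : ∀ i, b i = τ^[i] v₀) {f g : Module.End L V} (hf : f ∈ commAlg σ τ)
    (hg : g ∈ commAlg σ τ) (h : f v₀ = g v₀) : f = g := by
  refine b.ext fun i => ?_
  rw [hb, commAlg_iter σ τ hf, commAlg_iter σ τ hg, h]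

theorem commAlg_finrank {p : ℕ} (hp : 0 < p) (b : Module.Basis (Fin p) L V) (v₀ : V)
    (hb : ∀ i, b i = τ^[i] v₀) (a : L) (ha : ∀ v, τ^[p] v = a • v) :
    Module.finrank F (commAlg σ τ) = Module.finrank F V := by
  let e : commAlg σ τ →ₗ[F] V :=
    { toFun := fun f => f.1 v₀
      map_add' := fun _ _ => rfl
      map_smul' := fun _ _ => rfl }
  refine (LinearEquiv.ofBijective e ⟨?_, ?_⟩).finrank_eq
  · intro f g h
    exact Subtype.ext (commAlg_ext b v₀ hb f.2 g.2 h)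
  · intro w
    obtain ⟨f, hf, h⟩ := commAlg_exists hp b v₀ hb a ha w
    exact ⟨⟨f, hf⟩, h⟩

theorem commAlg_unit {p : ℕ} [FiniteDimensional L V] (hV : Module.finrank L V = p) (a : L)
    (ha : ∀ v, τ^[p] v = a • v)
    (hn : ∀ r, 0 < r → r < p → ¬ ∃ d : L, ∏ i ∈ Finset.range p, σ^[i] d = a ^ r)
    (f : commAlg σ τ) : IsUnit f ∨ f = 0 := by
  obtain ⟨f, hf⟩ := f
  by_cases h0 : f = 0
  · right; exact Subtype.ext h0
  left
  have hker : ∀ w ∈ LinearMap.ker f, τ w ∈ LinearMap.ker f := by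
    intro w hw
    rw [LinearMap.mem_ker] at hw ⊢
    rw [hf, hw, map_zero]
  let τ' : LinearMap.ker f →ₛₗ[(σ : L →+* L)] LinearMap.ker f :=
    { toFun := fun w => ⟨τ w, hker w w.2⟩
      map_add' := fun x y => Subtype.ext (by simp)
      map_smul' := fun x y => Subtype.ext (by simp) }
  have hτ' : ∀ n w, ((τ'^[n] w : LinearMap.ker f) : V) = τ^[n] w := by
    intro n
    induction n with
    | zero => intro w; rfl
    | succ n ih => intro w; rw [Function.iterate_succ_apply, ih]; rfl
  have hd := det_semilinear (σ : L →+* L) τ' p a (fun w => Subtype.ext (by rw [hτ', ha]; rfl))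
  have hlt : Module.finrank L (LinearMap.ker f) < p := by
    rw [← hV]
    refine Submodule.finrank_lt fun h => h0 (LinearMap.ker_eq_top.1 h)
  have hz : Module.finrank L (LinearMap.ker f) = 0 := by
    by_contra hne
    exact hn _ (Nat.pos_of_ne_zero hne) hlt hd
  have hinj : LinearMap.ker f = ⊥ := Submodule.finrank_eq_zero.1 hz
  have hu : IsUnit f := (LinearMap.isUnit_iff_ker_eq_bot f).2 hinj
  obtain ⟨g, hfg, hgf⟩ := isUnit_iff_exists.1 hu
  have hg : g ∈ commAlg σ τ := by
    intro v
    have h1 : ∀ x, f (g x) = x := fun x => LinearMap.congr_fun hfg x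
    apply LinearMap.ker_eq_bot.1 hinj
    rw [h1, hf, h1]
  exact isUnit_iff_exists.2 ⟨⟨g, hg⟩, Subtype.ext hfg, Subtype.ext hgf⟩

theorem commAlg_central {p : ℕ} (hp : 1 < p) (b : Module.Basis (Fin p) L V) (v₀ : V)
    (hb : ∀ i, b i = τ^[i] v₀) (a : L) (ha : ∀ v, τ^[p] v = a • v)
    (hσ : ∀ j, 0 < j → j < p → ∃ l : L, σ^[j] l ≠ l)
    (hfix : ∀ c : L, σ c = c → ∃ r, algebraMap F L r = c) :
    Algebra.IsCentral F (commAlg σ τ) := by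
  constructor
  rintro ⟨z, hz⟩ hzc
  rw [Subalgebra.mem_center_iff] at hzc
  have hzc' : ∀ f ∈ commAlg σ τ, ∀ v, f (z v) = z (f v) := fun f hf v =>
    LinearMap.congr_fun (congrArg Subtype.val (hzc ⟨f, hf⟩)) v
  have hb0 : b ⟨0, by omega⟩ = v₀ := hb _
  have hiter : ∀ (l : L) (i : ℕ) (v : V), τ^[i] (l • v) = σ^[i] l • τ^[i] v := by
    intro l i v
    induction i with
    | zero => rfl
    | succ i ih => simp only [Function.iterate_succ_apply', ih, map_smulₛₗ]; rfl
  have hc : ∀ j : Fin p, 0 < j.1 → b.repr (z v₀) j = 0 := by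
    intro j hj
    obtain ⟨l, hl⟩ := hσ j hj j.2
    obtain ⟨f, hf, hfl⟩ := commAlg_exists (by omega) b v₀ hb a ha (l • v₀)
    have h1 := hzc' f hf v₀
    rw [hfl, map_smul] at h1
    have hfb : ∀ i, f (b i) = σ^[i] l • b i := by
      intro i
      rw [hb, commAlg_iter σ τ hf, hfl, hiter]
    have h2 : b.repr (f (z v₀)) j = b.repr (z v₀) j * σ^[j] l := by
      conv_lhs => rw [← b.sum_repr (z v₀)]
      rw [map_sum, map_sum]
      simp [hfb, Finsupp.single_apply]
    rw [h1] at h2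
    simp only [map_smul, Finsupp.smul_apply, smul_eq_mul] at h2
    by_contra hne
    apply hl
    apply mul_left_cancel₀ hne
    rw [← h2, mul_comm]
  set c := b.repr (z v₀) ⟨0, by omega⟩ with hcdef
  have hz0 : z v₀ = c • v₀ := by
    conv_lhs => rw [← b.sum_repr (z v₀)]
    rw [Finset.sum_eq_single (⟨0, by omega⟩ : Fin p), hb0]
    · intro j _ hj
      rw [hc j, zero_smul]
      rcases Nat.eq_zero_or_pos j.1 with h | h
      · exact (hj (Fin.ext h)).elim
      · exact h
    · simp
  obtain ⟨x, hx, hxv⟩ := commAlg_exists (by omega) b v₀ hb a ha (τ v₀)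
  have h1 := hzc' x hx v₀
  rw [hxv, hz, hz0, map_smul, hxv, map_smulₛₗ] at h1
  have hb1 : b ⟨1, hp⟩ = τ v₀ := hb _
  rw [← hb1] at h1
  have h2 : σ c = c := by
    have := congrArg (fun v => b.repr v ⟨1, hp⟩) h1
    simpa using this.symm
  obtain ⟨r, hr⟩ := hfix c h2
  rw [Algebra.mem_bot]
  refine ⟨r, Subtype.ext ?_⟩
  refine commAlg_ext b v₀ hb (algebraMap F (commAlg σ τ) r).2 hz ?_
  rw [hz0, ← hr, algebraMap_smul]
  rfl
end

open Polynomial in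
theorem exists_model {F L : Type u} [Field F] [Field L] [Algebra F L] (σ : L →ₐ[F] L) (p : ℕ)
    (hp : 0 < p) (hσ : ∀ l, σ^[p] l = l) (a : F) :
    ∃ (V : Type u) (_ : AddCommGroup V) (_ : Module L V) (_ : Module F V)
      (_ : IsScalarTower F L V) (τ : V →ₛₗ[(σ : L →+* L)] V) (b : Module.Basis (Fin p) L V) (v₀ : V),
      (∀ i, b i = τ^[i] v₀) ∧ (∀ v, τ^[p] v = algebraMap F L a • v) := by
  let g : L[X] := X ^ p - C (algebraMap F L a)
  have hg : g.Monic := monic_X_pow_sub_C _ hp.ne'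
  have hdeg : g.natDegree = p := natDegree_X_pow_sub_C
  have hmap : g ∣ g.map (σ : L →+* L) := by
    simp [g]
  let s : AdjoinRoot g →+* AdjoinRoot g := AdjoinRoot.map (σ : L →+* L) g g hmap
  have hs_of : ∀ l, s (algebraMap L _ l) = algebraMap L _ (σ l) := fun l =>
    AdjoinRoot.map_of _ _ _ _ _
  have hs_root : s (AdjoinRoot.root g) = AdjoinRoot.root g := AdjoinRoot.map_root _ _ _ _
  let τ : AdjoinRoot g →ₛₗ[(σ : L →+* L)] AdjoinRoot g :=
    { toFun := fun v => AdjoinRoot.root g * s v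
      map_add' := fun x y => by rw [map_add, mul_add]
      map_smul' := fun l x => by
        rw [Algebra.smul_def, map_mul, hs_of, Algebra.smul_def]
        simp only [RingHom.coe_coe]
        ring }
  have hτ : ∀ n v, τ^[n] v = AdjoinRoot.root g ^ n * s^[n] v := by
    intro n v
    induction n with
    | zero => simp
    | succ n ih =>
      rw [Function.iterate_succ_apply', ih, Function.iterate_succ_apply']
      change AdjoinRoot.root g * s _ = _
      rw [map_mul, map_pow, hs_root]
      ring
  have hsn : ∀ n l, s^[n] (algebraMap L _ l) = algebraMap L _ (σ^[n] l) := by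
    intro n l
    induction n with
    | zero => rfl
    | succ n ih => rw [Function.iterate_succ_apply', ih, hs_of, Function.iterate_succ_apply']
  have hsp : ∀ v, s^[p] v = v := by
    intro v
    have : (s ^ p) = RingHom.id _ := by
      refine Ideal.Quotient.ringHom_ext ?_
      refine Polynomial.ringHom_ext ?_ ?_
      · intro l
        have := hsn p l
        rw [hσ, ← RingHom.coe_pow] at this
        exact this
      · change (s ^ p) (AdjoinRoot.root g) = AdjoinRoot.root g
        rw [RingHom.coe_pow]
        exact Function.iterate_fixed hs_root p
    rw [← RingHom.coe_pow, this]
    rfl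
  have hroot : AdjoinRoot.root g ^ p = algebraMap L _ (algebraMap F L a) := by
    have : AdjoinRoot.mk g g = 0 := AdjoinRoot.mk_self
    have h2 : AdjoinRoot.mk g (X ^ p - C (algebraMap F L a)) = 0 := this
    rw [map_sub, map_pow, AdjoinRoot.mk_X, AdjoinRoot.mk_C, sub_eq_zero] at h2
    exact h2
  refine ⟨AdjoinRoot g, inferInstance, inferInstance, inferInstance, inferInstance, τ,
    (AdjoinRoot.powerBasis' hg).basis.reindex (finCongr hdeg), 1, ?_, ?_⟩
  · intro i
    have h1 : s^[i] (1 : AdjoinRoot g) = 1 := Function.iterate_fixed (map_one s) _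
    rw [hτ, h1, mul_one, Module.Basis.reindex_apply, PowerBasis.basis_eq_pow]
    rfl
  · intro v
    rw [hτ, hsp, hroot, Algebra.smul_def]

theorem norm_surj_prime {F L : Type u} [Field F] [Field L] [Algebra F L] [FiniteDimensional F L]
    [IsGalois F L] (p : ℕ) (hp : p.Prime) (hBr : BrauerPComponentTrivial F p)
    (hd : Module.finrank F L = p) (a : F) : ∃ x : L, Algebra.norm F x = a := by
  rcases eq_or_ne a 0 with rfl | ha0
  · exact ⟨0, Algebra.norm_zero⟩
  have := Fact.mk hp
  have hcard : Nat.card (L ≃ₐ[F] L) = p := by rw [IsGalois.card_aut_eq_finrank, hd]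
  have : IsCyclic (L ≃ₐ[F] L) := isCyclic_of_prime_card hcard
  obtain ⟨σ, hσ⟩ := IsCyclic.exists_generator (α := L ≃ₐ[F] L)
  have hord : orderOf σ = p := by
    rw [orderOf_eq_card_of_forall_mem_zpowers hσ, hcard]
  have hpow : ∀ (n : ℕ) (l : L), (σ : L →ₐ[F] L)^[n] l = (σ ^ n) l := by
    intro n l
    induction n with
    | zero => rfl
    | succ n ih => rw [Function.iterate_succ_apply', ih, pow_succ']; rfl
  by_contra hno
  obtain ⟨V, _, _, _, _, τ, b, v₀, hb, ha⟩ := exists_model (σ : L →ₐ[F] L) p hp.pos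
    (fun l => by rw [hpow, ← hord, pow_orderOf_eq_one]; rfl) a
  have hprod : ∀ d : L, ∏ i ∈ Finset.range p, (σ : L →ₐ[F] L)^[i] d =
      algebraMap F L (Algebra.norm F d) := by
    intro d
    rw [Algebra.norm_eq_prod_automorphisms]
    simp_rw [hpow]
    rw [Finset.prod_range]
    subst hord
    have hbij := (finEquivZPowers (isOfFinOrder_of_finite σ))
    refine Fintype.prod_bijective (fun i : Fin (orderOf σ) => σ ^ (i : ℕ)) ?_ _ _ (fun _ => rfl)
    rw [Fintype.bijective_iff_injective_and_card]
    refine ⟨fun i j hij => Fin.ext (pow_injOn_Iio_orderOf i.2 j.2 hij), ?_⟩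
    rw [Fintype.card_fin, ← Nat.card_eq_fintype_card, hcard]
  have hfd : FiniteDimensional L V := b.finiteDimensional_of_finite
  have hV : Module.finrank L V = p := by rw [Module.finrank_eq_card_basis b, Fintype.card_fin]
  have hn : ∀ r, 0 < r → r < p → ¬ ∃ d : L,
      ∏ i ∈ Finset.range p, (σ : L →ₐ[F] L)^[i] d = (algebraMap F L a) ^ r := by
    rintro r hr0 hrp ⟨d, hd'⟩
    rw [hprod, ← map_pow] at hd'
    have h1 : Algebra.norm F d = a ^ r := (algebraMap F L).injective hd'
    have h2 : Algebra.norm F (algebraMap F L a) = a ^ p := by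
      rw [Algebra.norm_algebraMap, hd]
    have hco : Nat.gcd r p = 1 := by
      exact ((Nat.Prime.coprime_iff_not_dvd hp).2 (Nat.not_dvd_of_pos_of_lt hr0 hrp)).symm
    have hbez := Nat.gcd_eq_gcd_ab r p
    rw [hco] at hbez
    apply hno
    refine ⟨d ^ (Nat.gcdA r p) * (algebraMap F L a) ^ (Nat.gcdB r p), ?_⟩
    let N : L →*₀ F := { (Algebra.norm F : L →* F) with map_zero' := Algebra.norm_zero }
    have hz : ∀ (x : L) (k : ℤ), Algebra.norm F (x ^ k) = Algebra.norm F x ^ k :=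
      fun x k => map_zpow₀ N x k
    rw [map_mul, hz, hz, h1, h2, ← zpow_natCast, ← zpow_natCast, ← zpow_mul,
      ← zpow_mul, ← zpow_add₀ ha0, ← hbez]
    simp
  have hu := commAlg_unit hV _ ha hn
  have hfr := commAlg_finrank hp.pos b v₀ hb _ ha
  have hcen := commAlg_central hp.one_lt b v₀ hb _ ha
    (fun j hj0 hjp => by
      by_contra hall
      push Not at hall
      have : σ ^ j = 1 := by
        ext l
        rw [← hpow, hall]; rfl
      exact pow_ne_one_of_lt_orderOf hj0.ne' (hord ▸ hjp) this)
    (fun c hc => by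
      have := (IsGalois.mem_bot_iff_fixed (F := F) (E := L) c).2 (fun f => by
        obtain ⟨n, hn⟩ := (mem_powers_iff_mem_zpowers.2 (hσ f))
        subst hn
        change (σ ^ n) c = c
        rw [← hpow]
        exact Function.iterate_fixed hc n)
      exact IntermediateField.mem_bot.1 this)
  have hFV : Module.finrank F V = p ^ 2 := by
    rw [← Module.finrank_mul_finrank F L V, hd, hV, sq]
  have : Nontrivial V := Module.nontrivial_of_finrank_pos (R := L) (by rw [hV]; exact hp.pos)
  let : DivisionRing (commAlg (σ : L →ₐ[F] L) τ) := DivisionRing.ofIsUnitOrEqZero hu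
  have hfin : FiniteDimensional F (commAlg (σ : L →ₐ[F] L) τ) :=
    Module.finite_of_finrank_pos (by rw [hfr, hFV]; exact pow_pos hp.pos 2)
  have := hBr (commAlg (σ : L →ₐ[F] L) τ) hcen hfin ⟨2, by rw [hfr, hFV]⟩
  rw [hfr, hFV] at this
  have := hp.one_lt
  nlinarith

theorem norm_surj_pgroup (p : ℕ) (hp : p.Prime) (n : ℕ) : ∀ {F M : Type u} [Field F] [Field M]
    [Algebra F M] [FiniteDimensional F M] [IsGalois F M]
    (_ : ∀ (E' : Type u) [Field E'] [Algebra F E'], Algebra.IsAlgebraic F E' →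
      BrauerPComponentTrivial E' p)
    (_ : Module.finrank F M = p ^ n) (a : F), ∃ x : M, Algebra.norm F x = a := by
  have := Fact.mk hp
  induction n with
  | zero =>
    intro F M _ _ _ _ _ _ hd a
    exact ⟨algebraMap F M a, by rw [Algebra.norm_algebraMap, hd]; simp⟩
  | succ n ih =>
    intro F M _ _ _ _ _ hBr hd a
    have hcard : Nat.card (M ≃ₐ[F] M) = p ^ (n + 1) := by rw [IsGalois.card_aut_eq_finrank, hd]
    obtain ⟨H, hH⟩ := Sylow.exists_subgroup_card_pow_prime (G := M ≃ₐ[F] M) p (n := n)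
      (by rw [hcard]; exact pow_dvd_pow p (Nat.le_succ n))
    have hidx : H.index = p := by
      have := H.card_mul_index
      rw [hH, hcard, pow_succ] at this
      exact Nat.eq_of_mul_eq_mul_left (pow_pos hp.pos n) this
    have : H.Normal := Subgroup.normal_of_index_eq_minFac_card (by
      rw [hidx, hcard, hp.pow_minFac (Nat.succ_ne_zero n)])
    let K := IntermediateField.fixedField H
    have hKM : Module.finrank K M = p ^ n := by
      rw [IntermediateField.finrank_fixedField_eq_card, hH]
    have hFK : Module.finrank F K = p := by
      have := Module.finrank_mul_finrank F K M
      rw [hKM, hd, pow_succ'] at this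
      exact Nat.eq_of_mul_eq_mul_right (pow_pos hp.pos n) this
    obtain ⟨y, hy⟩ := norm_surj_prime (F := F) (L := K) p hp (hBr F inferInstance) hFK a
    obtain ⟨x, hx⟩ := ih (F := K) (M := M) (fun E' _ _ hE' => by
      let : Algebra F E' := ((algebraMap K E').comp (algebraMap F K)).toAlgebra
      have : IsScalarTower F K E' := IsScalarTower.of_algebraMap_eq (fun _ => rfl)
      exact hBr E' (Algebra.IsAlgebraic.trans F K E')) hKM y
    exact ⟨x, by rw [← Algebra.norm_norm (S := K), hx, hy]⟩

theorem exists_galois (E₁ E₂ : Type u) [Field E₁] [Field E₂] [Algebra E₁ E₂]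
    [FiniteDimensional E₁ E₂] [Algebra.IsSeparable E₁ E₂] :
    ∃ (M : Type u) (_ : Field M) (_ : Algebra E₁ M) (_ : Algebra E₂ M) (_ : IsScalarTower E₁ E₂ M)
      (_ : FiniteDimensional E₁ M), IsGalois E₁ M := by
  have : Algebra.IsSeparable E₁ (SeparableClosure E₂) :=
    Algebra.IsSeparable.trans E₁ E₂ (SeparableClosure E₂)
  have : IsSepClosure E₁ (SeparableClosure E₂) := ⟨inferInstance, inferInstance⟩
  have : IsGalois E₁ (SeparableClosure E₂) := IsSepClosure.isGalois
  exact ⟨IntermediateField.normalClosure E₁ E₂ (SeparableClosure E₂), inferInstance, inferInstance,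
    inferInstance, inferInstance, inferInstance, inferInstance⟩

theorem stmt_18 {E : Type u} [Field E] (p : ℕ) (hp : p.Prime)
    (hBr : ∀ (E' : Type u) [Field E'] [Algebra E E'], Algebra.IsAlgebraic E E' →
      BrauerPComponentTrivial E' p) :
    ∀ (E₁ : Type u) [Field E₁] [Algebra E E₁], ∀ (E₂ : Type u) [Field E₂] [Algebra E E₂]
      [Algebra E₁ E₂] [IsScalarTower E E₁ E₂],
      FiniteDimensional E E₂ → Algebra.IsSeparable E E₂ →
      ¬ p ∣ Monoid.exponent (E₁ˣ ⧸ normGroup E₁ E₂) := by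
  intro E₁ _ _ E₂ _ _ _ _ hfin hsep
  have := Fact.mk hp
  have : FiniteDimensional E E₁ := FiniteDimensional.left E E₁ E₂
  have : FiniteDimensional E₁ E₂ := FiniteDimensional.right E E₁ E₂
  have : Algebra.IsSeparable E₁ E₂ := Algebra.isSeparable_tower_top_of_isSeparable E E₁ E₂
  obtain ⟨M, _, _, _, _, _, _⟩ := exists_galois E₁ E₂
  let P : Sylow p (M ≃ₐ[E₁] M) := default
  let K := IntermediateField.fixedField (P : Subgroup (M ≃ₐ[E₁] M))
  have hKM : Module.finrank K M = Nat.card P :=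
    IntermediateField.finrank_fixedField_eq_card _
  have hEK : Module.finrank E₁ K = (P : Subgroup (M ≃ₐ[E₁] M)).index := by
    have h1 := Module.finrank_mul_finrank E₁ K M
    have h2 := (P : Subgroup (M ≃ₐ[E₁] M)).card_mul_index
    rw [IsGalois.card_aut_eq_finrank, ← h1, ← hKM, mul_comm] at h2
    exact (Nat.eq_of_mul_eq_mul_right Module.finrank_pos h2).symm
  have hndvd : ¬ p ∣ Module.finrank E₁ K := by
    rw [hEK]; exact P.not_dvd_index
  intro hdvd
  refine hndvd (hdvd.trans (Monoid.exponent_dvd_of_forall_pow_eq_one fun g => ?_))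
  induction g using QuotientGroup.induction_on with
  | H g =>
  rw [← QuotientGroup.mk_pow, QuotientGroup.eq_one_iff]
  obtain ⟨n, hn⟩ := IsPGroup.iff_card.1 P.isPGroup'
  obtain ⟨x, hx⟩ := norm_surj_pgroup p hp n (F := K) (M := M) (fun E' _ _ hE' => by
      let : Algebra E₁ E' := ((algebraMap K E').comp (algebraMap E₁ K)).toAlgebra
      have : IsScalarTower E₁ K E' := IsScalarTower.of_algebraMap_eq (fun _ => rfl)
      let : Algebra E E' := ((algebraMap E₁ E').comp (algebraMap E E₁)).toAlgebra
      have : IsScalarTower E E₁ E' := IsScalarTower.of_algebraMap_eq (fun _ => rfl)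
      have := Algebra.IsAlgebraic.trans E₁ K E'
      exact hBr E' (Algebra.IsAlgebraic.trans E E₁ E')) (hKM.trans hn) (algebraMap E₁ K g)
  have h3 : Algebra.norm E₁ (Algebra.norm E₂ x) = (g : E₁) ^ Module.finrank E₁ K := by
    have : FiniteDimensional E₂ M := FiniteDimensional.right E₁ E₂ M
    rw [Algebra.norm_norm, ← Algebra.norm_norm (S := K), hx, Algebra.norm_algebraMap]
  have hy0 : Algebra.norm E₂ x ≠ 0 := by
    intro h0
    rw [h0, Algebra.norm_zero] at h3
    exact pow_ne_zero _ g.ne_zero h3.symm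
  exact ⟨Units.mk0 _ hy0, Units.ext (by simpa using h3)⟩
end

section
/- Let E be a field, p a prime, and suppose there exists an algebraic extension F of E with Br(F)_p ≠ 0. Then there exists a finite separable extension F₁ of E and a cyclic extension F₂/F₁ of degree p such that N(F₂/F₁) ≠ F₁*. -/
universe u

open scoped TensorProduct

def NS (F : Type u) [Field F] (p : ℕ) : Prop :=
  ∀ (C : Type u) [Field C] [Algebra F C], Algebra.IsAlgebraic F C → ∀ τ : C ≃ₐ[F] C,
    τ ^ p = 1 → τ ≠ 1 → ∀ c : C, c ≠ 0 → τ c = c →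
      ∃ y : C, ∏ i ∈ Finset.range p, (τ ^ i) y = c

theorem NS.trans {F M : Type u} [Field F] [Field M] [Algebra F M] {p : ℕ} (h : NS F p)
    (hM : Algebra.IsAlgebraic F M) : NS M p := by
  intro C _ _ hC τ hτ hτ1 c hc0 hc
  let _ : Algebra F C := ((algebraMap M C).comp (algebraMap F M)).toAlgebra
  have : IsScalarTower F M C := IsScalarTower.of_algebraMap_eq (fun _ => rfl)
  have hpow : ∀ (i : ℕ) (x : C), ((τ.restrictScalars F) ^ i) x = (τ ^ i) x := by
    intro i
    induction i with
    | zero => intro x; rfl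
    | succ n ih => intro x; rw [pow_succ, pow_succ, AlgEquiv.mul_apply, AlgEquiv.mul_apply, ih]; rfl
  have := h C (Algebra.IsAlgebraic.trans F M C) (τ.restrictScalars F)
    (by ext x; rw [hpow, hτ]; rfl)
    (by intro h1; apply hτ1; ext x; exact DFunLike.congr_fun h1 x) c hc0 hc
  obtain ⟨y, hy⟩ := this
  exact ⟨y, by simpa only [hpow] using hy⟩

theorem finrank_dvd_of_algHom {M : Type*} {C D : Type*} [Field M] [DivisionRing C] [DivisionRing D]
    [Algebra M C] [Algebra M D] [FiniteDimensional M D] (j : C →ₐ[M] D) :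
    Module.finrank M C ∣ Module.finrank M D := by
  let _ : Module C D := Module.compHom D j.toRingHom
  have : IsScalarTower M C D := ⟨fun m c d => by
    change j (m • c) * d = m • (j c * d)
    rw [map_smul, smul_mul_assoc]⟩
  exact Module.finrank_dvd_finrank_right M C D

theorem baseChange_division {F M D : Type u} [Field F] [Field M] [Algebra F M] [DivisionRing D]
    [Algebra F D] [FiniteDimensional F M] [FiniteDimensional F D] (hc : Algebra.IsCentral F D)
    (hcop : (Module.finrank F D).Coprime (Module.finrank F M)) :
    ∃ (D' : Type u) (_ : DivisionRing D') (_ : Algebra M D') (j : D →+* D'),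
      Algebra.IsCentral M D' ∧ FiniteDimensional M D' ∧
      Module.finrank M D' = Module.finrank F D ∧
      ∀ x : F, j (algebraMap F D x) = algebraMap M D' (algebraMap F M x) := by
  have hleft : ∀ x : M ⊗[F] D, x ≠ 0 → ∃ y, y * x = 1 := by
    intro x hx
    let I : Submodule (M ⊗[F] D) (M ⊗[F] D) := Submodule.span _ {x}
    let _ : Module D I := Module.compHom I
      (Algebra.TensorProduct.includeRight : D →ₐ[F] M ⊗[F] D).toRingHom
    have : IsScalarTower F D I := ⟨fun m c d => by
      change ((Algebra.TensorProduct.includeRight : D →ₐ[F] M ⊗[F] D) (m • c)) • d =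
        m • (((Algebra.TensorProduct.includeRight : D →ₐ[F] M ⊗[F] D) c) • d)
      rw [map_smul, smul_assoc]⟩
    have h1 : Module.finrank F D ∣ Module.finrank F I := Module.finrank_dvd_finrank_right F D I
    have h2 : Module.finrank F M ∣ Module.finrank F I := Module.finrank_dvd_finrank_right F M I
    have h3 := hcop.mul_dvd_of_dvd_of_dvd h1 h2
    have h4 : Module.finrank F (M ⊗[F] D) = Module.finrank F M * Module.finrank F D :=
      Module.finrank_tensorProduct
    have hpos : 0 < Module.finrank F I := by
      have : FiniteDimensional F I := inferInstanceAs
        (FiniteDimensional F (I.restrictScalars F))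
      have : Nontrivial I := ⟨⟨⟨x, Submodule.mem_span_singleton_self x⟩, 0, fun h => hx (by
        simpa using congrArg Subtype.val h)⟩⟩
      exact Module.finrank_pos
    have h5 : I.restrictScalars F = ⊤ := by
      apply Submodule.eq_top_of_finrank_eq
      apply le_antisymm (Submodule.finrank_le _)
      rw [h4, mul_comm]
      exact Nat.le_of_dvd hpos h3
    have h6 : (1 : M ⊗[F] D) ∈ I := by
      have : (1 : M ⊗[F] D) ∈ I.restrictScalars F := by rw [h5]; trivial
      exact this
    obtain ⟨y, hy⟩ := Submodule.mem_span_singleton.1 h6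
    exact ⟨y, hy⟩
  have hunit : ∀ x : M ⊗[F] D, IsUnit x ∨ x = 0 := by
    intro x
    by_cases hx : x = 0
    · exact Or.inr hx
    left
    obtain ⟨y, hy⟩ := hleft x hx
    have hy0 : y ≠ 0 := by rintro rfl; simp at hy
    obtain ⟨z, hz⟩ := hleft y hy0
    have : z = x := by
      calc z = z * (y * x) := by rw [hy, mul_one]
        _ = x := by rw [← mul_assoc, hz, one_mul]
    exact ⟨⟨x, y, by rw [← this, hz], hy⟩, rfl⟩
  let dr : DivisionRing (M ⊗[F] D) := DivisionRing.ofIsUnitOrEqZero hunit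
  refine ⟨M ⊗[F] D, dr, Algebra.TensorProduct.leftAlgebra,
    (Algebra.TensorProduct.includeRight : D →ₐ[F] M ⊗[F] D).toRingHom, ⟨?_⟩, ?_, ?_, ?_⟩
  · intro z hz
    have hz' : z ∈ Subalgebra.centralizer F
        ((Algebra.TensorProduct.includeRight : D →ₐ[F] M ⊗[F] D).range : Set (M ⊗[F] D)) := by
      rw [Subalgebra.mem_centralizer_iff]
      intro g _
      exact (Subalgebra.mem_center_iff.1 hz g)
    rw [Subalgebra.centralizer_range_includeRight_eq_center_tensorProduct] at hz'
    obtain ⟨w, rfl⟩ := hz'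
    clear hz
    induction w with
    | zero => simp
    | add a b ha hb => 
      simp only [map_add]
      exact Subalgebra.add_mem _ ha hb
    | tmul m d =>
      obtain ⟨d, hd⟩ := d
      have := hc.out hd
      obtain ⟨f, rfl⟩ := this
      refine ⟨m * algebraMap F M f, ?_⟩
      change (m * algebraMap F M f) ⊗ₜ[F] (1 : D) = m ⊗ₜ[F] (algebraMap F D f)
      rw [Algebra.algebraMap_eq_smul_one, Algebra.algebraMap_eq_smul_one, mul_smul_comm, mul_one,
        TensorProduct.smul_tmul]
  · exact Module.Finite.base_change F M D
  · exact Module.finrank_baseChange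
  · intro x
    change (1 : M) ⊗ₜ[F] (algebraMap F D x) = (algebraMap F M x) ⊗ₜ[F] (1 : D)
    rw [Algebra.algebraMap_eq_smul_one, Algebra.algebraMap_eq_smul_one, TensorProduct.smul_tmul]

theorem exists_adjoinRoot_hom {M D : Type*} [Field M] [Ring D] [Algebra M D] (a : D) :
    Nonempty (AdjoinRoot (minpoly M a) →ₐ[M] D) := by
  refine ⟨Ideal.Quotient.liftₐ (Ideal.span {minpoly M a}) (Polynomial.aeval a) ?_⟩
  intro x hx
  obtain ⟨y, rfl⟩ := Ideal.mem_span_singleton.1 hx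
  rw [map_mul, minpoly.aeval, zero_mul]

theorem natDegree_minpoly_dvd {M D : Type*} [Field M] [DivisionRing D] [Algebra M D]
    [FiniteDimensional M D] (a : D) : (minpoly M a).natDegree ∣ Module.finrank M D := by
  have hi : IsIntegral M a := Algebra.IsIntegral.isIntegral a
  have hirr : Irreducible (minpoly M a) := minpoly.irreducible hi
  have : Fact (Irreducible (minpoly M a)) := ⟨hirr⟩
  obtain ⟨j⟩ := exists_adjoinRoot_hom (M := M) a
  have h := finrank_dvd_of_algHom j
  rwa [(AdjoinRoot.powerBasis hirr.ne_zero).finrank, AdjoinRoot.powerBasis_dim] at h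

theorem exists_cyclic_subfield {M D N : Type u} [Field M] [DivisionRing D] [Algebra M D]
    [FiniteDimensional M D] [Field N] [Algebra M N] [FiniteDimensional M N] [IsGalois M N]
    (p : ℕ) (hp : p.Prime) (hG : IsPGroup p (N ≃ₐ[M] N)) (a : D)
    (ha : a ∉ (⊥ : Subalgebra M D)) (hs : ((minpoly M a).map (algebraMap M N)).Splits) :
    ∃ L : IntermediateField M N, IsGalois M L ∧ Module.finrank M L = p ∧
      Nonempty (L →ₐ[M] D) := by
  have : Fact p.Prime := ⟨hp⟩
  have hi : IsIntegral M a := Algebra.IsIntegral.isIntegral a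
  have hirr : Irreducible (minpoly M a) := minpoly.irreducible hi
  have hdeg : (minpoly M a).natDegree ≠ 1 := by
    intro h
    apply ha
    exact (minpoly.natDegree_eq_one_iff).1 h
  obtain ⟨b, hb⟩ := hs.exists_eval_eq_zero (by
    rw [Polynomial.degree_map]
    exact (Polynomial.degree_pos_of_irreducible hirr).ne')
  have hb' : Polynomial.aeval b (minpoly M a) = 0 := by
    rw [Polynomial.aeval_def, ← Polynomial.eval_map]; exact hb
  have hab : minpoly M a = minpoly M b :=
    minpoly.eq_of_irreducible_of_monic hirr hb' (minpoly.monic hi)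
  have hbi : IsIntegral M b := Algebra.IsIntegral.isIntegral b
  have hfr : Module.finrank M (IntermediateField.adjoin M {b}) ≠ 1 := by
    rw [IntermediateField.adjoin.finrank hbi, ← hab]; exact hdeg
  set B := IntermediateField.adjoin M {b} with hB
  have hcardidx : B.fixingSubgroup.index ≠ 1 := by
    rwa [← IntermediateField.finrank_eq_fixingSubgroup_index]
  obtain ⟨m, hm⟩ := IsPGroup.iff_card.1 hG
  obtain ⟨n, hn⟩ := IsPGroup.iff_card.1 (hG.to_subgroup B.fixingSubgroup)
  have hmul := B.fixingSubgroup.card_mul_index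
  have hnm : n < m := by
    by_contra hle
    push Not at hle
    have h1 : p ^ m ≤ p ^ n := Nat.pow_le_pow_right hp.pos hle
    have h2 : B.fixingSubgroup.index ≠ 0 := Subgroup.index_ne_zero_of_finite
    have h3 : 2 ≤ B.fixingSubgroup.index := by omega
    have h4 : 0 < p ^ n := pow_pos hp.pos n
    rw [hn, hm] at hmul
    nlinarith
  obtain ⟨m, rfl⟩ : ∃ k, m = k + 1 := ⟨m - 1, by omega⟩
  obtain ⟨K, hK, hle⟩ := Sylow.exists_subgroup_card_pow_prime_le p (m := m)
    (by rw [hm]; exact pow_dvd_pow _ (by omega)) B.fixingSubgroup hn (by omega)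
  have hidx : K.index = p := by
    have := K.card_mul_index
    rw [hK, hm, pow_succ] at this
    exact Nat.eq_of_mul_eq_mul_left (pow_pos hp.pos m) this
  have hnorm : K.Normal := by
    apply Subgroup.normal_of_index_eq_minFac_card
    rw [hidx, hm, Nat.pow_minFac (by omega), hp.minFac_eq]
  refine ⟨IntermediateField.fixedField K, inferInstance, ?_, ?_⟩
  · rw [IntermediateField.finrank_eq_fixingSubgroup_index,
      IntermediateField.fixingSubgroup_fixedField, hidx]
  · have hLB : IntermediateField.fixedField K ≤ B := by
      rw [← IsGalois.fixedField_fixingSubgroup B]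
      exact IntermediateField.fixedField_le hle
    obtain ⟨j⟩ := exists_adjoinRoot_hom (M := M) a
    rw [hab] at j
    exact ⟨(j.comp (IntermediateField.adjoinRootEquivAdjoin M hbi).symm.toAlgHom).comp
      (IntermediateField.inclusion hLB)⟩

theorem exists_normalizing {M D L : Type u} [Field M] [DivisionRing D] [Algebra M D]
    [FiniteDimensional M D] [Field L] [Algebra M L] [FiniteDimensional M L] [IsGalois M L]
    (j : L →ₐ[M] D) (hj : ∃ l x, x * j l ≠ j l * x) :
    ∃ (u : D) (g : L ≃ₐ[M] L), u ≠ 0 ∧ g ≠ 1 ∧ ∀ l, u * j l = j (g l) * u := by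
  obtain ⟨θ, hθ⟩ := Field.exists_primitive_element M L
  have hθi : IsIntegral M θ := Algebra.IsIntegral.isIntegral θ
  have htop : Algebra.adjoin M {θ} = ⊤ := by
    rw [← IntermediateField.adjoin_simple_toSubalgebra_of_isAlgebraic hθi.isAlgebraic, hθ]; rfl
  have key : ∀ (u : D) (g : L →ₐ[M] L), u * j θ = j (g θ) * u → ∀ l, u * j l = j (g l) * u := by
    intro u g hu l
    have hl : l ∈ Algebra.adjoin M {θ} := by rw [htop]; trivial
    induction hl using Algebra.adjoin_induction with
    | mem x hx => rw [Set.mem_singleton_iff.1 hx]; exact hu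
    | algebraMap r => simp only [AlgHom.commutes]; exact (Algebra.commutes r u).symm
    | add x y _ _ hx hy => simp only [map_add, mul_add, add_mul, hx, hy]
    | mul x y _ _ hx hy => rw [map_mul, ← mul_assoc, hx, mul_assoc, hy, map_mul, map_mul, mul_assoc]
  let _ : Module L D := Module.compHom D j.toRingHom
  have hsm : ∀ (l : L) (d : D), l • d = j l * d := fun _ _ => rfl
  have : IsScalarTower M L D := ⟨fun m c d => by
    rw [hsm, hsm, map_smul, smul_mul_assoc]⟩
  have : FiniteDimensional L D := FiniteDimensional.right M L D
  let T : Module.End L D :=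
    { toFun := fun x => x * j θ
      map_add' := fun x y => add_mul x y _
      map_smul' := fun l x => by simp only [hsm, RingHom.id_apply, mul_assoc] }
  have hT : ∀ x, T x = x * j θ := fun _ => rfl
  have hTpow : ∀ (q : Polynomial M) (x : D),
      Polynomial.aeval T (q.map (algebraMap M L)) x = x * j (Polynomial.aeval θ q) := by
    intro q x
    induction q using Polynomial.induction_on' generalizing x with
    | add p q hp hq => simp only [Polynomial.map_add, map_add, LinearMap.add_apply, hp, hq, mul_add]
    | monomial n a =>
      have hp : ∀ n x, (T ^ n) x = x * j θ ^ n := by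
        intro n
        induction n with
        | zero => intro x; simp
        | succ n ih => intro x; rw [pow_succ, Module.End.mul_apply, ih, hT, mul_assoc, ← pow_succ']
      rw [Polynomial.map_monomial, Polynomial.aeval_monomial, Polynomial.aeval_monomial,
        Module.End.mul_apply, hp, Module.algebraMap_end_apply, hsm, map_mul, map_pow,
        AlgHom.commutes, ← mul_assoc, ← mul_assoc, Algebra.commutes]
  set f := (minpoly M θ).map (algebraMap M L) with hf
  have hf0 : f ≠ 0 := (Polynomial.map_ne_zero (minpoly.ne_zero hθi))
  have hTf : Polynomial.aeval T f = 0 := by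
    ext x
    rw [hTpow, minpoly.aeval, map_zero, mul_zero]; rfl
  have hdvd : minpoly L T ∣ f := minpoly.dvd L T hTf
  have hspl : (minpoly L T).Splits := (IsGalois.splits M θ).of_dvd hf0 hdvd
  have hsep : (minpoly L T).Separable :=
    Polynomial.Separable.of_dvd (Polynomial.Separable.map (IsGalois.separable M θ)) hdvd
  have hTint : IsIntegral L T := Algebra.IsIntegral.isIntegral T
  by_cases hall : ∀ μ ∈ (minpoly L T).roots, μ = θ
  · exfalso
    have hnd : (minpoly L T).roots.Nodup := Polynomial.nodup_roots hsep
    have hrep := Multiset.eq_replicate_card.2 hall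
    have hcard : (minpoly L T).roots.card ≤ 1 := by
      classical
      have := Multiset.nodup_iff_count_le_one.1 hnd θ
      rwa [hrep, Multiset.count_replicate_self] at this
    have hprod := hspl.eq_prod_roots_of_monic (minpoly.monic hTint)
    have hmin : minpoly L T = Polynomial.X - Polynomial.C θ := by
      rw [hrep] at hprod
      interval_cases hc : (minpoly L T).roots.card
      · exfalso
        apply minpoly.ne_one L T
        simpa using hprod
      · simpa using hprod
    have hT0 := minpoly.aeval L T
    rw [hmin, map_sub, Polynomial.aeval_X, Polynomial.aeval_C, sub_eq_zero] at hT0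
    obtain ⟨l, x, hlx⟩ := hj
    apply hlx
    refine key x (AlgHom.id M L) ?_ l
    exact LinearMap.congr_fun hT0 x
  · push Not at hall
    obtain ⟨μ, hμ, hne⟩ := hall
    have hroot : (minpoly L T).IsRoot μ := Polynomial.isRoot_of_mem_roots hμ
    obtain ⟨u, hu⟩ := (Module.End.hasEigenvalue_of_isRoot hroot).exists_hasEigenvector
    have hu1 : u * j θ = j μ * u := hu.apply_eq_smul
    have hfr : Polynomial.aeval μ (minpoly M θ) = 0 := by
      have := hroot.dvd hdvd
      rwa [hf, Polynomial.IsRoot, Polynomial.eval_map_algebraMap] at this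
    obtain ⟨g, hg⟩ : ∃ g : L →ₐ[M] L, g θ = μ :=
      IntermediateField.exists_algHom_of_splits_of_aeval
        (fun x => ⟨Algebra.IsIntegral.isIntegral x, IsGalois.splits M x⟩) hfr
    let g' : L ≃ₐ[M] L := AlgEquiv.ofBijective g (Algebra.IsAlgebraic.algHom_bijective g)
    refine ⟨u, g', hu.2, ?_, ?_⟩
    · intro h
      apply hne
      rw [← hg]
      exact DFunLike.congr_fun h θ
    · exact key u g (by rw [hg]; exact hu1)

theorem no_division {M D L C : Type u} [Field M] [DivisionRing D] [Algebra M D]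
    [FiniteDimensional M D] [Field L] [Algebra M L] [FiniteDimensional M L] [IsGalois M L]
    [Field C] [Algebra M C] (p : ℕ) (hp : p.Prime) (hNS : NS M p)
    (j : L →ₐ[M] D) (hj : ∃ l x, x * j l ≠ j l * x) (hL : Module.finrank M L = p)
    (k : ℕ) (hD : Module.finrank M D = p ^ k)
    (i : C →ₐ[M] D) (hi : ∀ x : D, (∀ l, x * j l = j l * x) ↔ ∃ c, i c = x) : False := by
  obtain ⟨u, g, hu0, hg1, hug⟩ := exists_normalizing j hj
  have hinj : Function.Injective i := i.toRingHom.injective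
  have hgp : g ^ p = 1 := by
    rw [← hL, ← IsGalois.card_aut_eq_finrank M L]; exact pow_card_eq_one'
  have hug' : ∀ l, u⁻¹ * j (g l) = j l * u⁻¹ := by
    intro l
    rw [eq_mul_inv_iff_mul_eq₀ hu0, mul_assoc, ← hug, ← mul_assoc, inv_mul_cancel₀ hu0, one_mul]
  have hiL : ∀ c l, i c * j l = j l * i c := fun c => (hi (i c)).2 ⟨c, rfl⟩
  have h1 : ∀ c, ∃ c', i c' = u * i c * u⁻¹ := by
    intro c
    rw [← hi]
    intro l
    obtain ⟨l, rfl⟩ := g.surjective l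
    rw [mul_assoc, hug', ← mul_assoc, mul_assoc u, hiL, ← mul_assoc, hug]
    simp only [mul_assoc]
  have h2 : ∀ c, ∃ c', i c' = u⁻¹ * i c * u := by
    intro c
    rw [← hi]
    intro l
    rw [mul_assoc, hug, ← mul_assoc, mul_assoc u⁻¹, hiL, ← mul_assoc, hug']
    simp only [mul_assoc]
  choose t ht using h1
  choose s hs using h2
  let τ : C ≃ₐ[M] C :=
    { toFun := t
      invFun := s
      left_inv := fun c => hinj (by rw [hs, ht]; simp [mul_assoc, hu0])
      right_inv := fun c => hinj (by rw [ht, hs]; simp [mul_assoc, hu0])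
      map_mul' := fun a b => hinj (by rw [ht, map_mul, map_mul, ht, ht]; simp [mul_assoc, hu0])
      map_add' := fun a b => hinj (by rw [ht, map_add, map_add, ht, ht, mul_add, add_mul])
      commutes' := fun r => hinj (by
        rw [ht, AlgHom.commutes, ← Algebra.commutes, mul_assoc, mul_inv_cancel₀ hu0, mul_one]) }
  have hτ : ∀ c, i (τ c) = u * i c * u⁻¹ := ht
  have hτ' : ∀ c, u * i c = i (τ c) * u := by
    intro c; rw [hτ, mul_assoc, inv_mul_cancel₀ hu0, mul_one]
  have hτn : ∀ (n : ℕ) c, u ^ n * i c = i ((τ ^ n) c) * u ^ n := by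
    intro n
    induction n with
    | zero => intro c; simp
    | succ n ih =>
      intro c
      rw [pow_succ u, mul_assoc, hτ', ← mul_assoc, ih, mul_assoc, ← AlgEquiv.mul_apply, ← pow_succ]
  have hun : ∀ (n : ℕ) l, u ^ n * j l = j ((g ^ n) l) * u ^ n := by
    intro n
    induction n with
    | zero => intro c; simp
    | succ n ih =>
      intro c
      rw [pow_succ u, mul_assoc, hug, ← mul_assoc, ih, mul_assoc, ← AlgEquiv.mul_apply, ← pow_succ]
  obtain ⟨w, hw⟩ : ∃ w, i w = u ^ p := by
    rw [← hi]; intro l; rw [hun, hgp]; rfl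
  have hup0 : u ^ p ≠ 0 := pow_ne_zero _ hu0
  have hw0 : w ≠ 0 := by
    rintro rfl
    rw [map_zero] at hw
    exact hup0 hw.symm
  have hτw : τ w = w := by
    apply hinj
    rw [hτ, hw, ← pow_succ', pow_succ, mul_assoc, mul_inv_cancel₀ hu0, mul_one]
  have hτp : τ ^ p = 1 := by
    ext c
    apply hinj
    have := hτn p c
    rw [← hw, ← map_mul, mul_comm, map_mul] at this
    rw [AlgEquiv.one_apply]
    exact (mul_right_cancel₀ (by rw [hw]; exact hup0) this).symm
  have hτ1 : τ ≠ 1 := by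
    intro h
    apply hg1
    ext l
    apply j.toRingHom.injective
    change j (g l) = j l
    obtain ⟨c, hc⟩ := (hi (j l)).1 (fun l' => by rw [← map_mul, mul_comm, map_mul])
    have h3 := hτ' c
    rw [h, AlgEquiv.one_apply, hc, hug] at h3
    exact mul_right_cancel₀ hu0 h3
  have : FiniteDimensional M C := FiniteDimensional.of_injective i.toLinearMap hinj
  obtain ⟨y, hy⟩ := hNS C inferInstance τ hτp hτ1 w hw0 hτw
  have hy0 : y ≠ 0 := by
    rintro rfl
    apply hw0
    rw [← hy]
    exact Finset.prod_eq_zero (Finset.mem_range.2 hp.pos) (map_zero _)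
  have hiy0 : i y ≠ 0 := fun h => hy0 (hinj (by rw [h, map_zero]))
  let v : D := (i y)⁻¹ * u
  have hvu : u = i y * v := by
    change u = i y * ((i y)⁻¹ * u)
    rw [← mul_assoc, mul_inv_cancel₀ hiy0, one_mul]
  have hvn : ∀ n, i (∏ k ∈ Finset.range n, (τ ^ k) y) * v ^ n = u ^ n := by
    intro n
    induction n with
    | zero => simp
    | succ n ih =>
      have h4 : ∏ k ∈ Finset.range (n + 1), (τ ^ k) y =
          τ (∏ k ∈ Finset.range n, (τ ^ k) y) * y := by
        rw [Finset.prod_range_succ', map_prod]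
        simp only [pow_succ', AlgEquiv.mul_apply, pow_zero, AlgEquiv.one_apply]
      rw [h4, pow_succ' v, map_mul, mul_assoc, ← mul_assoc (i y), ← hvu, ← mul_assoc, ← hτ',
        mul_assoc, ih, ← pow_succ']
  have hvp : v ^ p = 1 := by
    have := hvn p
    rw [hy, hw] at this
    exact mul_left_cancel₀ hup0 (by rw [this, mul_one])
  have hvbot : v ∈ (⊥ : Subalgebra M D) := by
    by_cases hv1 : v = 1
    · rw [hv1]; exact one_mem _
    · have hgeom : ∑ k ∈ Finset.range p, v ^ k = 0 := by
        have := geom_sum_mul v p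
        rw [hvp, sub_self] at this
        exact (mul_eq_zero.1 this).resolve_right (sub_ne_zero.2 hv1)
      have hq : Polynomial.aeval v (∑ k ∈ Finset.range p, (Polynomial.X : Polynomial M) ^ k) = 0 := by
        simpa using hgeom
      have hq0 : (∑ k ∈ Finset.range p, (Polynomial.X : Polynomial M) ^ k).Monic :=
        Polynomial.monic_geom_sum_X hp.ne_zero
      have hdeg := Polynomial.natDegree_le_of_dvd (minpoly.dvd M v hq) hq0.ne_zero
      have hdeg2 : (∑ k ∈ Finset.range p, (Polynomial.X : Polynomial M) ^ k).natDegree < p := by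
        refine lt_of_le_of_lt (Polynomial.natDegree_sum_le_of_forall_le _ _ (n := p - 1) ?_)
          (Nat.sub_lt hp.pos one_pos)
        intro m hm
        rw [Polynomial.natDegree_X_pow]
        have := Finset.mem_range.1 hm
        omega
      have hdvd := natDegree_minpoly_dvd (M := M) v
      rw [hD] at hdvd
      obtain ⟨m, -, hm⟩ := (Nat.dvd_prime_pow hp).1 hdvd
      have hm0 : m = 0 := by
        by_contra h
        have : p ≤ p ^ m := Nat.le_self_pow h p
        omega
      rw [hm0, pow_zero] at hm
      exact minpoly.natDegree_eq_one_iff.1 hm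
  apply hτ1
  ext c
  apply hinj
  obtain ⟨r, hr⟩ := hvbot
  have hvc : ∀ x : D, v * x = x * v := by
    intro x
    rw [← hr]
    exact Algebra.commutes r x
  have h5 := hτ' c
  rw [hvu, mul_assoc, hvc, ← mul_assoc, ← map_mul, mul_comm y, map_mul, mul_assoc] at h5
  exact (mul_right_cancel₀ (by rw [← hvu]; exact hu0) h5).symm

/-- The induction statement: division algebras of dimension `n` (a power of `p`) are trivial. -/
def Triv (p n : ℕ) : Prop :=
  ∀ (F D : Type u) [Field F] [DivisionRing D] [Algebra F D], NS F p → Algebra.IsCentral F D →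
    FiniteDimensional F D → Module.finrank F D = n → (∃ k : ℕ, n = p ^ k) → n = 1

theorem comm_of_small {M C : Type u} [Field M] [DivisionRing C] [Algebra M C]
    [FiniteDimensional M C] (p : ℕ) (hp : p.Prime) (hNS : NS M p) (n : ℕ)
    (IH : ∀ m < n, Triv.{u} p m) (hlt : Module.finrank M C < n)
    (k : ℕ) (hk : Module.finrank M C = p ^ k) (x y : C) : x * y = y * x := by
  let Z := Subring.center C
  let _ : Algebra M Z := RingHom.toAlgebra ((algebraMap M C).codRestrict Z (fun m => by
    rw [Subring.mem_center_iff]; intro g; exact (Algebra.commutes m g).symm))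
  have : IsScalarTower M Z C := IsScalarTower.of_algebraMap_eq (fun _ => rfl)
  have : FiniteDimensional M Z := FiniteDimensional.left M Z C
  have : FiniteDimensional Z C := FiniteDimensional.right M Z C
  have hmul := Module.finrank_mul_finrank M Z C
  have hd : Module.finrank Z C ∣ p ^ k := by rw [← hk, ← hmul]; exact dvd_mul_left _ _
  obtain ⟨m, -, hm⟩ := (Nat.dvd_prime_pow hp).1 hd
  have hle : Module.finrank Z C ≤ Module.finrank M C :=
    Nat.le_of_dvd Module.finrank_pos (by rw [← hmul]; exact dvd_mul_left _ _)
  have hcen : Algebra.IsCentral Z C := ⟨fun z hz => by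
    have hz' : z ∈ Z := by
      rw [Subring.mem_center_iff]; exact fun g => (Subalgebra.mem_center_iff.1 hz g)
    exact ⟨⟨z, hz'⟩, rfl⟩⟩
  have h1 := IH _ (lt_of_le_of_lt hle hlt) Z C (hNS.trans inferInstance) hcen inferInstance rfl
    ⟨m, hm⟩
  have hx : x ∈ (⊥ : Subalgebra Z C) := by
    rw [Subalgebra.bot_eq_top_of_finrank_eq_one h1]; trivial
  obtain ⟨z, rfl⟩ := hx
  exact Algebra.commutes z y

theorem exists_centralizer_field {M D L : Type u} [Field M] [DivisionRing D] [Algebra M D]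
    [FiniteDimensional M D] [Field L] [Algebra M L] (p : ℕ) (hp : p.Prime) (hNS : NS M p)
    (j : L →ₐ[M] D) (hj : ∃ l x, x * j l ≠ j l * x)
    (k : ℕ) (hD : Module.finrank M D = p ^ k)
    (IH : ∀ m < Module.finrank M D, Triv.{u} p m) :
    ∃ (C : Type u) (_ : Field C) (_ : Algebra M C) (i : C →ₐ[M] D),
      ∀ x : D, (∀ l, x * j l = j l * x) ↔ ∃ c, i c = x := by
  let C := Subalgebra.centralizer M (Set.range j)
  have hmem : ∀ x : D, x ∈ C ↔ ∀ l, x * j l = j l * x := by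
    intro x
    rw [Subalgebra.mem_centralizer_iff]
    simp only [Set.forall_mem_range]
    exact forall_congr' fun l => eq_comm
  let dC : DivisionRing C := divisionRingOfFiniteDimensional M C
  have hdvd : Module.finrank M C ∣ Module.finrank M D :=
    @finrank_dvd_of_algHom M C D _ dC _ (Subalgebra.algebra C) _ _ C.val
  have hne : Module.finrank M C ≠ Module.finrank M D := by
    intro h
    have htop : C = ⊤ := Algebra.toSubmodule_eq_top.1
      (Submodule.eq_top_of_finrank_eq ((C.finrank_toSubmodule).trans h))
    obtain ⟨l, x, hlx⟩ := hj
    apply hlx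
    have hx : x ∈ C := by rw [htop]; trivial
    exact (hmem x).1 hx l
  have hlt : Module.finrank M C < Module.finrank M D :=
    lt_of_le_of_ne (Nat.le_of_dvd Module.finrank_pos hdvd) hne
  obtain ⟨m, -, hm⟩ := (Nat.dvd_prime_pow hp).1 (hD ▸ hdvd)
  have hcomm : ∀ x y : C, x * y = y * x :=
    @comm_of_small M C _ dC (Subalgebra.algebra C) _ p hp hNS _ IH hlt m hm
  let fC : Field C := { dC with mul_comm := hcomm }
  refine ⟨C, fC, Subalgebra.algebra C, C.val, fun x => ?_⟩
  rw [← hmem]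
  constructor
  · intro h
    exact ⟨⟨x, h⟩, rfl⟩
  · intro h
    obtain ⟨c, hc⟩ := h
    rw [← hc]
    exact c.2

theorem triv_all (p : ℕ) (hp : p.Prime) (n : ℕ) : Triv.{u} p n := by
  induction n using Nat.strong_induction_on with
  | _ n IH =>
  intro F D _ _ _ hNS hcen hfin hn hk
  have hpf : Fact p.Prime := ⟨hp⟩
  by_contra hn1
  have hbt : (⊥ : Subalgebra F D) ≠ ⊤ := by
    intro h
    apply hn1
    rw [← hn, ← Subalgebra.finrank_bot (F := F) (E := D), h]
    exact (Subalgebra.topEquiv.toLinearEquiv.finrank_eq).symm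
  obtain ⟨a, ha, hsep⟩ := JacobsonNoether.exists_separable_and_not_isCentral' hbt
  let N := (minpoly F a).SplittingField
  have : IsGalois F N := IsGalois.of_separable_splitting_field (p := minpoly F a) hsep
  obtain ⟨P⟩ : Nonempty (Sylow p (N ≃ₐ[F] N)) := inferInstance
  let M := IntermediateField.fixedField (P : Subgroup (N ≃ₐ[F] N))
  have hMrank : Module.finrank F M = (P : Subgroup (N ≃ₐ[F] N)).index := by
    rw [IntermediateField.finrank_eq_fixingSubgroup_index,
      IntermediateField.fixingSubgroup_fixedField]
  have hcop : (Module.finrank F D).Coprime (Module.finrank F M) := by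
    obtain ⟨k, hk⟩ := hk
    rw [hn, hk, hMrank]
    exact Nat.Coprime.pow_left _ ((Nat.Prime.coprime_iff_not_dvd hp).2 P.not_dvd_index)
  obtain ⟨D', _, _, f, hcen', hfin', hrank', hf⟩ := baseChange_division (M := M) hcen hcop
  have hG : IsPGroup p (N ≃ₐ[M] N) :=
    P.isPGroup'.of_equiv (IntermediateField.subgroupEquivAlgEquiv (P : Subgroup (N ≃ₐ[F] N)))
  have hfinj : Function.Injective f := f.injective
  have ha' : f a ∉ (⊥ : Subalgebra M D') := by
    intro h
    apply ha
    apply hcen.out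
    rw [Subalgebra.mem_center_iff]
    intro b
    apply hfinj
    obtain ⟨m, hm⟩ := h
    have hm : algebraMap M D' m = f a := hm
    rw [map_mul, map_mul, ← hm]
    exact (Algebra.commutes m (f b)).symm
  have hspl : ((minpoly M (f a)).map (algebraMap M N)).Splits := by
    have h1 : ((minpoly F a).map (algebraMap F N)).Splits :=
      Polynomial.SplittingField.splits (minpoly F a)
    have h2 : minpoly M (f a) ∣ (minpoly F a).map (algebraMap F M) := by
      apply minpoly.dvd
      rw [Polynomial.aeval_def, Polynomial.eval₂_map]
      have h3 : (algebraMap M D').comp (algebraMap F M) = f.comp (algebraMap F D) := by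
        ext x; exact (hf x).symm
      rw [h3, ← Polynomial.hom_eval₂, ← Polynomial.aeval_def, minpoly.aeval, map_zero]
    have h4 : (minpoly M (f a)).map (algebraMap M N) ∣ (minpoly F a).map (algebraMap F N) := by
      rw [IsScalarTower.algebraMap_eq F M N, ← Polynomial.map_map]
      exact Polynomial.map_dvd _ h2
    exact h1.of_dvd (Polynomial.map_ne_zero (minpoly.ne_zero (Algebra.IsIntegral.isIntegral a))) h4
  obtain ⟨L, hLG, hLr, ⟨j⟩⟩ := exists_cyclic_subfield p hp hG (f a) ha' hspl
  have hNSM : NS M p := hNS.trans inferInstance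
  have hj : ∃ l x, x * j l ≠ j l * x := by
    by_contra hcon
    push Not at hcon
    have hbot : j.range ≤ ⊥ := by
      rintro _ ⟨l, rfl⟩
      apply hcen'.out
      rw [Subalgebra.mem_center_iff]
      exact fun b => hcon l b
    have h1 : Module.finrank M j.range = p := by
      rw [← hLr]
      exact ((AlgEquiv.ofInjective j j.toRingHom.injective).toLinearEquiv.finrank_eq).symm
    have h2 : j.range = ⊥ := le_bot_iff.1 hbot
    rw [h2, Subalgebra.finrank_bot] at h1
    exact hp.one_lt.ne h1
  obtain ⟨k, hk⟩ := hk
  have hD' : Module.finrank M D' = p ^ k := by rw [hrank', hn, hk]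
  obtain ⟨C, _, _, i, hi⟩ := exists_centralizer_field p hp hNSM j hj k hD'
    (by rw [hrank', hn]; exact IH)
  exact no_division p hp hNSM j hj hLr k hD' i hi

/-- The negation of the conclusion of the main theorem. -/
def NormTop (E : Type u) [Field E] (p : ℕ) : Prop :=
  ∀ (F₁ : IntermediateField E (AlgebraicClosure E))
    (F₂ : IntermediateField F₁ (AlgebraicClosure E)),
    FiniteDimensional E F₁ → Algebra.IsSeparable E F₁ → Module.finrank F₁ F₂ = p →
      IsGalois F₁ F₂ → IsCyclic (F₂ ≃ₐ[F₁] F₂) → normGroup F₁ F₂ = ⊤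

theorem exists_norm_eq_of_normTop {E L : Type u} [Field E] [Field L] [Algebra E L] (p : ℕ) (hp : p.Prime)
    (H : NormTop E p) [FiniteDimensional E L] [Algebra.IsSeparable E L]
    (K : IntermediateField E L) [IsGalois K L] (hK : Module.finrank K L = p)
    (c : K) (hc : c ≠ 0) : ∃ y : L, Algebra.norm K y = c := by
  have hpf : Fact p.Prime := ⟨hp⟩
  let ι : L →ₐ[E] AlgebraicClosure E := IsAlgClosed.lift
  let F₁ : IntermediateField E (AlgebraicClosure E) := K.map ι
  have hle : F₁ ≤ ι.fieldRange := by
    rintro _ ⟨x, -, rfl⟩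
    exact ⟨x, rfl⟩
  let F₂ : IntermediateField F₁ (AlgebraicClosure E) := IntermediateField.extendScalars hle
  let e₁ : K ≃ₐ[E] F₁ := K.equivMap ι
  have hmem : ∀ x : L, ι x ∈ F₂ := fun x => ⟨x, rfl⟩
  let g : L →+* F₂ := ι.toRingHom.codRestrict F₂ hmem
  have hg : ∀ x, (g x : AlgebraicClosure E) = ι x := fun x => rfl
  have hbij : Function.Bijective g := by
    refine ⟨g.injective, ?_⟩
    rintro ⟨y, hy⟩
    obtain ⟨x, hx⟩ := hy
    exact ⟨x, Subtype.ext hx⟩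
  let e₂ : L ≃+* F₂ := RingEquiv.ofBijective g hbij
  have hcomp : (algebraMap F₁ F₂).comp (e₁.toRingEquiv : K →+* F₁)
      = (e₂ : L →+* F₂).comp (algebraMap K L) := by
    ext x
    rfl
  have hfin : FiniteDimensional E F₁ := Module.Finite.equiv e₁.toLinearEquiv
  have hsep : Algebra.IsSeparable E F₁ := Algebra.IsSeparable.of_algHom E K e₁.symm.toAlgHom
  have hrank : Module.finrank F₁ F₂ = p := by
    rw [← hK]
    exact (Algebra.finrank_eq_of_equiv_equiv e₁.toRingEquiv e₂ hcomp).symm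
  have hgal : IsGalois F₁ F₂ := IsGalois.of_equiv_equiv hcomp
  have hf2 : FiniteDimensional F₁ F₂ := Module.finite_of_finrank_pos (by rw [hrank]; exact hp.pos)
  have hcyc : IsCyclic (F₂ ≃ₐ[F₁] F₂) :=
    isCyclic_of_prime_card (p := p) (by rw [IsGalois.card_aut_eq_finrank, hrank])
  have htop := H F₁ F₂ hfin hsep hrank hgal hcyc
  have hc' : e₁ c ≠ 0 := by
    intro h
    exact hc (e₁.injective (by rw [h, map_zero]))
  have hu : Units.mk0 (e₁ c) hc' ∈ normGroup F₁ F₂ := by rw [htop]; trivial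
  obtain ⟨v, hv⟩ := hu
  have hv' : Algebra.norm F₁ (v : F₂) = e₁ c := congrArg Units.val hv
  refine ⟨e₂.symm v, ?_⟩
  rw [Algebra.norm_eq_of_equiv_equiv e₁.toRingEquiv e₂ hcomp, e₂.apply_symm_apply, hv']
  exact e₁.symm_apply_apply c

theorem norm_fixedField {E L : Type u} [Field E] [Field L] [Algebra E L] (p : ℕ)
    [FiniteDimensional E L] (τ : L ≃ₐ[E] L) (hτ : orderOf τ = p) (y : L) :
    (Algebra.norm (IntermediateField.fixedField (Subgroup.zpowers τ)) y : L)
      = ∏ i ∈ Finset.range p, (τ ^ i) y := by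
  have hgal : IsGalois (IntermediateField.fixedField (Subgroup.zpowers τ)) L :=
    IsGalois.of_fixed_field L (Subgroup.zpowers τ)
  have h := Algebra.norm_eq_prod_automorphisms
    (IntermediateField.fixedField (Subgroup.zpowers τ)) y
  have h1 : (∏ i ∈ Finset.range p, (τ ^ i) y) = ∏ σ : Subgroup.zpowers τ, (σ : L ≃ₐ[E] L) y := by
    rw [← hτ, ← Fin.prod_univ_eq_prod_range (fun i => (τ ^ i) y)]
    exact Fintype.prod_equiv (finEquivZPowers (isOfFinOrder_of_finite τ)) _ _ (fun i => rfl)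
  rw [h1]
  refine h.trans ?_
  exact (Fintype.prod_equiv
    (IntermediateField.subgroupEquivAlgEquiv (Subgroup.zpowers τ)).toEquiv _ _
      (fun i => rfl)).symm

theorem exists_restrict {E C : Type u} [Field E] [Field C] [Algebra E C] (p : ℕ) (hp : p.Prime)
    (τ : C ≃ₐ[E] C) (hτ : τ ^ p = 1) (M : IntermediateField E C) (hM : ∀ x ∈ M, τ x ∈ M) :
    ∃ σ : M ≃ₐ[E] M, (∀ (i : ℕ) (x : M), (((σ ^ i) x : M) : C) = (τ ^ i) x) ∧ σ ^ p = 1 := by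
  have hpow : ∀ (i : ℕ), ∀ x ∈ M, (τ ^ i) x ∈ M := by
    intro i
    induction i with
    | zero => exact fun x hx => hx
    | succ i ih => intro x hx; rw [pow_succ']; exact hM _ (ih x hx)
  let g : M →ₐ[E] M := (τ.toAlgHom.comp M.val).codRestrict M.toSubalgebra (fun x => hM x x.2)
  have hg : ∀ x : M, (g x : C) = τ x := fun x => rfl
  have hbij : Function.Bijective g := by
    refine ⟨g.toRingHom.injective, fun y => ?_⟩
    refine ⟨⟨(τ ^ (p - 1)) y, hpow _ _ y.2⟩, Subtype.ext ?_⟩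
    rw [hg]
    change (τ * τ ^ (p - 1)) y = y
    rw [← pow_succ', Nat.sub_add_cancel hp.one_le, hτ]
    rfl
  let σ : M ≃ₐ[E] M := AlgEquiv.ofBijective g hbij
  have hσ : ∀ (i : ℕ) (x : M), (((σ ^ i) x : M) : C) = (τ ^ i) x := by
    intro i
    induction i with
    | zero => exact fun x => rfl
    | succ i ih =>
      intro x
      rw [pow_succ', pow_succ']
      change τ ((σ ^ i) x : M) = τ ((τ ^ i) x)
      rw [ih]
  refine ⟨σ, hσ, ?_⟩
  ext x
  rw [hσ, hτ]
  rfl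

theorem exists_separable_moved {E C : Type u} [Field E] [Field C] [Algebra E C]
    (hC : Algebra.IsAlgebraic E C) (τ : C ≃ₐ[E] C) (hτ1 : τ ≠ 1) :
    ∃ x : C, IsSeparable E x ∧ τ x ≠ x := by
  by_contra hcon
  push Not at hcon
  apply hτ1
  ext x
  obtain ⟨q, hq⟩ := ExpChar.exists E
  have : ExpChar C q := expChar_of_injective_algebraMap (algebraMap E C).injective q
  obtain ⟨n, ⟨z, hz⟩⟩ := IsPurelyInseparable.pow_mem (separableClosure E C) q x
  have h1 : τ (x ^ q ^ n) = x ^ q ^ n := by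
    rw [← hz]
    exact hcon _ (mem_separableClosure_iff.1 z.2)
  rw [map_pow] at h1
  exact iterateFrobenius_inj C q n h1

theorem norm_sep {E : Type u} [Field E] (p : ℕ) (hp : p.Prime) (H : NormTop E p)
    {C : Type u} [Field C] [Algebra E C] (hC : Algebra.IsAlgebraic E C) (τ : C ≃ₐ[E] C)
    (hτ : τ ^ p = 1) (hτ1 : τ ≠ 1) (c : C) (hc : c ≠ 0) (hτc : τ c = c)
    (hcs : IsSeparable E c) :
    ∃ y : C, IsSeparable E y ∧ ∏ i ∈ Finset.range p, (τ ^ i) y = c := by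
  have hpf : Fact p.Prime := ⟨hp⟩
  obtain ⟨x, hxs, hx⟩ := exists_separable_moved hC τ hτ1
  let S : Set C := insert c ((fun i : ℕ => (τ ^ i) x) '' (Finset.range p : Set ℕ))
  have hSfin : S.Finite := ((Finset.finite_toSet _).image _).insert c
  have hSsep : ∀ s ∈ S, IsSeparable E s := by
    rintro s (rfl | ⟨i, -, rfl⟩)
    · exact hcs
    · exact hxs.map (τ ^ i).toAlgHom (τ ^ i).injective
  let M := IntermediateField.adjoin E S
  have : Finite S := hSfin
  have hMfin : FiniteDimensional E M :=
    IntermediateField.finiteDimensional_adjoin (fun s _ => Algebra.IsIntegral.isIntegral s)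
  have hMsep : Algebra.IsSeparable E M :=
    (IntermediateField.isSeparable_adjoin_iff_isSeparable E C).2 hSsep
  have hSM : S ⊆ M := IntermediateField.subset_adjoin E S
  have hcM : c ∈ M := hSM (Or.inl rfl)
  have hxM : x ∈ M := hSM (Or.inr ⟨0, by simpa using hp.pos, rfl⟩)
  have hM : ∀ z ∈ M, τ z ∈ M := by
    have h1 : M ≤ M.comap τ.toAlgHom := by
      rw [IntermediateField.adjoin_le_iff]
      rintro s (rfl | ⟨i, hi, rfl⟩)
      · change τ s ∈ M
        rw [hτc]; exact hcM
      · change (τ * τ ^ i) x ∈ M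
        rw [← pow_succ']
        have hi : i < p := by simpa using hi
        rcases Nat.lt_or_ge (i + 1) p with h | h
        · exact hSM (Or.inr ⟨i + 1, by simpa using h, rfl⟩)
        · have : i + 1 = p := by omega
          rw [this, hτ]; exact hxM
    exact h1
  obtain ⟨σ, hσ, hσp⟩ := exists_restrict p hp τ hτ M hM
  have hσ1 : σ ≠ 1 := by
    intro h
    apply hx
    have := hσ 1 ⟨x, hxM⟩
    rw [h] at this
    simpa using this.symm
  have hord : orderOf σ = p := orderOf_eq_prime hσp hσ1
  let K := IntermediateField.fixedField (Subgroup.zpowers σ)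
  have hgal : IsGalois K M := IsGalois.of_fixed_field M (Subgroup.zpowers σ)
  have hrank : Module.finrank K M = p := by
    rw [IntermediateField.finrank_fixedField_eq_card, Nat.card_zpowers, hord]
  have hσc : σ ⟨c, hcM⟩ = ⟨c, hcM⟩ := by
    apply Subtype.ext
    have := hσ 1 ⟨c, hcM⟩
    simpa [hτc] using this
  have hcK : (⟨c, hcM⟩ : M) ∈ K := by
    rw [IntermediateField.mem_fixedField_iff]
    intro f hf
    have hle : Subgroup.zpowers σ ≤ MulAction.stabilizer (M ≃ₐ[E] M) (⟨c, hcM⟩ : M) := by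
      rw [Subgroup.zpowers_le]
      exact hσc
    exact hle hf
  obtain ⟨y, hy⟩ := exists_norm_eq_of_normTop p hp H K hrank ⟨⟨c, hcM⟩, hcK⟩ (by
    intro h
    exact hc (congrArg (fun t : K => ((t : M) : C)) h))
  refine ⟨y, (Algebra.IsSeparable.isSeparable E y).map M.val M.val.injective, ?_⟩
  have h2 := norm_fixedField p σ hord y
  have h3 : (Algebra.norm (IntermediateField.fixedField (Subgroup.zpowers σ)) y : M)
    = ⟨c, hcM⟩ := congrArg (fun t : K => (t : M)) hy
  rw [h3] at h2
  have h4 : M.val _ = M.val _ := congrArg M.val h2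
  rw [map_prod] at h4
  exact (h4.trans (Finset.prod_congr rfl fun i _ => hσ i y)).symm

theorem exists_pow_separable {E C : Type u} [Field E] [Field C] [Algebra E C] (q : ℕ) [ExpChar E q]
    (hC : Algebra.IsAlgebraic E C) (x : C) : ∃ n : ℕ, IsSeparable E (x ^ q ^ n) := by
  obtain ⟨n, ⟨z, hz⟩⟩ := IsPurelyInseparable.pow_mem (separableClosure E C) q x
  refine ⟨n, ?_⟩
  rw [← hz]
  exact mem_separableClosure_iff.1 z.2

theorem prod_pow_fixed {E C : Type u} [Field E] [Field C] [Algebra E C] (τ : C ≃ₐ[E] C) (p : ℕ)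
    (c : C) (hτc : τ c = c) : ∏ i ∈ Finset.range p, (τ ^ i) c = c ^ p := by
  have h : ∀ i : ℕ, (τ ^ i) c = c := by
    intro i
    induction i with
    | zero => rfl
    | succ i ih => rw [pow_succ']; change τ ((τ ^ i) c) = c; rw [ih, hτc]
  simp [h]

theorem norm_coprime {E : Type u} [Field E] (p : ℕ) (hp : p.Prime) (H : NormTop E p)
    (q : ℕ) [ExpChar E q] (hq : Nat.Coprime q p) : NS E p := by
  intro C _ _ hC τ hτ hτ1 c hc hτc
  obtain ⟨n, hn⟩ := exists_pow_separable q hC c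
  obtain ⟨y, -, hy⟩ := norm_sep p hp H hC τ hτ hτ1 (c ^ q ^ n) (pow_ne_zero _ hc)
    (by rw [map_pow, hτc]) hn
  have hco : IsCoprime ((q ^ n : ℕ) : ℤ) (p : ℤ) := Nat.isCoprime_iff_coprime.2 (hq.pow_left n)
  obtain ⟨a, b, hab⟩ := hco
  refine ⟨y ^ a * c ^ b, ?_⟩
  simp only [map_mul, map_zpow₀, Finset.prod_mul_distrib, Finset.prod_zpow]
  rw [hy, prod_pow_fixed τ p c hτc, ← zpow_natCast, ← zpow_natCast, ← zpow_mul, ← zpow_mul,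
    ← zpow_add₀ hc, mul_comm _ a, mul_comm _ b, hab, zpow_one]

theorem exists_sum_ne_zero {E C : Type u} [Field E] [Field C] [Algebra E C] (p : ℕ) (hp : p.Prime)
    (τ : C ≃ₐ[E] C) (hτ : τ ^ p = 1) (hτ1 : τ ≠ 1) (a : ℕ → C) (ha : a 0 ≠ 0) :
    ∃ θ : C, ∑ i ∈ Finset.range p, a i * (τ ^ i) θ ≠ 0 := by
  have hpf : Fact p.Prime := ⟨hp⟩
  have hord : orderOf τ = p := orderOf_eq_prime hτ hτ1
  by_contra hcon
  push Not at hcon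
  let f : Fin p → (C →* C) := fun i => ((τ ^ (i : ℕ) : C ≃ₐ[E] C) : C →* C)
  have hf : Function.Injective f := by
    intro i j hij
    have h1 : τ ^ (i : ℕ) = τ ^ (j : ℕ) := by
      ext x
      exact DFunLike.congr_fun hij x
    exact Fin.ext (pow_injOn_Iio_orderOf (by simp [hord]) (by simp [hord]) h1)
  have hli := (linearIndependent_monoidHom C C).comp f hf
  rw [Fintype.linearIndependent_iff] at hli
  have := hli (fun i => a i) (by
    funext θ
    simp only [Finset.sum_apply, Pi.smul_apply, Function.comp, smul_eq_mul, Pi.zero_apply]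
    rw [← hcon θ]
    exact Fin.sum_univ_eq_sum_range (fun i => a i * (τ ^ i) θ) p) ⟨0, hp.pos⟩
  exact ha this

/-- Hilbert 90. -/
theorem hilbert90 {E C : Type u} [Field E] [Field C] [Algebra E C] (p : ℕ) (hp : p.Prime)
    (τ : C ≃ₐ[E] C) (hτ : τ ^ p = 1) (hτ1 : τ ≠ 1) (z : C)
    (hz : ∏ i ∈ Finset.range p, (τ ^ i) z = 1) : ∃ v : C, v ≠ 0 ∧ τ v = z * v := by
  obtain ⟨θ, hθ⟩ := exists_sum_ne_zero p hp τ hτ hτ1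
    (fun i => ∏ j ∈ Finset.range i, (τ ^ j) z) (by simp)
  set b := ∑ i ∈ Finset.range p, (∏ j ∈ Finset.range i, (τ ^ j) z) * (τ ^ i) θ with hb
  have h1 : z * τ b = b := by
    let g : ℕ → C := fun i => (∏ j ∈ Finset.range i, (τ ^ j) z) * (τ ^ i) θ
    have h2 : z * τ b = ∑ i ∈ Finset.range p, g (i + 1) := by
      rw [hb, map_sum, Finset.mul_sum]
      refine Finset.sum_congr rfl fun i _ => ?_
      rw [map_mul, map_prod, ← mul_assoc]
      simp only [g]
      rw [Finset.prod_range_succ']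
      have h3 : ∀ (k : ℕ) (x : C), τ ((τ ^ k) x) = (τ ^ (k + 1)) x := by
        intro k x; rw [pow_succ']; rfl
      simp only [h3]
      rw [mul_comm z]
      rfl
    have h4 : g p = g 0 := by
      simp only [g]
      rw [hz, hτ]
      simp
    have h5 := Finset.sum_range_succ g p
    rw [Finset.sum_range_succ', h4] at h5
    rw [h2]
    exact add_right_cancel h5
  refine ⟨b⁻¹, inv_ne_zero hθ, ?_⟩
  have hτb : τ b ≠ 0 := by
    intro h
    rw [h, mul_zero] at h1
    exact hθ h1.symm
  rw [map_inv₀]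
  field_simp
  rw [mul_comm, h1]

theorem exists_trace_one {E C : Type u} [Field E] [Field C] [Algebra E C] (p : ℕ) (hp : p.Prime)
    (τ : C ≃ₐ[E] C) (hτ : τ ^ p = 1) (hτ1 : τ ≠ 1) :
    ∃ β : C, ∑ i ∈ Finset.range p, (τ ^ i) β = 1 := by
  obtain ⟨θ, hθ⟩ := exists_sum_ne_zero p hp τ hτ hτ1 (fun _ => 1) one_ne_zero
  simp only [one_mul] at hθ
  set t := ∑ i ∈ Finset.range p, (τ ^ i) θ with ht
  have h3 : ∀ (k : ℕ) (x : C), τ ((τ ^ k) x) = (τ ^ (k + 1)) x := by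
    intro k x; rw [pow_succ']; rfl
  have h1 : τ t = t := by
    rw [ht, map_sum]
    simp only [h3]
    have h5 := Finset.sum_range_succ (fun i => (τ ^ i) θ) p
    rw [Finset.sum_range_succ', hτ] at h5
    exact add_right_cancel h5
  have h2 : ∀ i : ℕ, (τ ^ i) t = t := by
    intro i
    induction i with
    | zero => rfl
    | succ i ih => rw [← h3, ih, h1]
  refine ⟨θ / t, ?_⟩
  simp only [map_div₀, h2]
  rw [← Finset.sum_div, ← ht, div_self hθ]

theorem additive90 {E C : Type u} [Field E] [Field C] [Algebra E C] (p : ℕ)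
    (τ : C ≃ₐ[E] C) (β : C)
    (hβ : ∑ i ∈ Finset.range p, (τ ^ i) β = 1) (γ : C)
    (hγ : ∑ i ∈ Finset.range p, (τ ^ i) γ = 0) : ∃ α : C, τ α - α = γ := by
  let g : ℕ → C := fun i => (∑ j ∈ Finset.range i, (τ ^ j) γ) * (τ ^ i) β
  have h3 : ∀ (k : ℕ) (x : C), τ ((τ ^ k) x) = (τ ^ (k + 1)) x := by
    intro k x; rw [pow_succ']; rfl
  have hβ' : ∑ i ∈ Finset.range p, (τ ^ (i + 1)) β = 1 := by
    have := congrArg τ hβ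
    rw [map_sum, map_one] at this
    simpa only [h3] using this
  have h2 : τ (∑ i ∈ Finset.range p, g i) = ∑ i ∈ Finset.range p, g (i + 1) - γ := by
    have h6 : ∀ i, τ (g i) = g (i + 1) - γ * (τ ^ (i + 1)) β := by
      intro i
      simp only [g, map_mul, map_sum, h3]
      rw [Finset.sum_range_succ' (fun j => (τ ^ j) γ)]
      simp only [pow_zero, AlgEquiv.one_apply]
      ring
    rw [map_sum]
    simp only [h6]
    rw [Finset.sum_sub_distrib, ← Finset.mul_sum, hβ', mul_one]
  have h4 : g p = g 0 := by
    simp only [g]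
    rw [hγ]
    simp
  have h5 := Finset.sum_range_succ g p
  rw [Finset.sum_range_succ', h4] at h5
  have h6 := add_right_cancel h5
  refine ⟨-∑ i ∈ Finset.range p, g i, ?_⟩
  rw [map_neg, h2, h6]
  ring

/-- The trick producing a norm from a norm of a `p ^ 2`-cover. -/
theorem cover_trick {E C : Type u} [Field E] [Field C] [Algebra E C] (p : ℕ) (hp : p.Prime)
    (T : C ≃ₐ[E] C) (hT : (T ^ p) ^ p = 1) (hT1 : T ^ p ≠ 1) (c z y : C) (hc : c ≠ 0)
    (hTc : T c = c) (hz : ∏ i ∈ Finset.range p, (T ^ i) z = c ^ p)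
    (hy : ∏ i ∈ Finset.range p, ((T ^ p) ^ i) y = z) :
    ∃ w : C, (T ^ p) w = w ∧ ∏ i ∈ Finset.range p, (T ^ i) w = c := by
  have hTi : ∀ i : ℕ, (T ^ i) c = c := by
    intro i
    induction i with
    | zero => rfl
    | succ i ih => rw [pow_succ']; change T ((T ^ i) c) = c; rw [ih, hTc]
  set P := ∏ i ∈ Finset.range p, (T ^ i) y with hP
  have hnorm : ∏ i ∈ Finset.range p, ((T ^ p) ^ i) (P / c) = 1 := by
    simp only [map_div₀, ← pow_mul, hTi]
    rw [Finset.prod_div_distrib, Finset.prod_const, Finset.card_range]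
    have h1 : ∏ i ∈ Finset.range p, (T ^ (p * i)) P = c ^ p := by
      rw [← hz, ← hy]
      simp only [hP, map_prod]
      rw [Finset.prod_comm]
      refine Finset.prod_congr rfl fun i _ => Finset.prod_congr rfl fun j _ => ?_
      change (T ^ (p * j) * T ^ i) y = (T ^ i * (T ^ p) ^ j) y
      rw [← pow_mul, ← pow_add, ← pow_add, add_comm]
    rw [h1, div_self (pow_ne_zero _ hc)]
  obtain ⟨v, hv, hv'⟩ := hilbert90 p hp (T ^ p) hT hT1 (P / c) hnorm
  have hne : ∀ i : ℕ, (T ^ i) v ≠ 0 := fun i => (map_ne_zero_iff _ (T ^ i).injective).2 hv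
  have h3 : ∀ (k : ℕ) (x : C), (T ^ k) (T x) = (T ^ (k + 1)) x := by
    intro k x; rw [pow_succ]; rfl
  have h3' : ∀ (k : ℕ) (x : C), T ((T ^ k) x) = (T ^ (k + 1)) x := by
    intro k x; rw [pow_succ']; rfl
  have hprod : ∏ i ∈ Finset.range p, (T ^ i) (y * v / T v) = c := by
    simp only [map_div₀, map_mul, h3]
    have h4 : ∀ i, (T ^ i) y * (T ^ i) v / (T ^ (i + 1)) v
        = (T ^ i) y * ((T ^ i) v / (T ^ (i + 1)) v) := fun i => mul_div_assoc _ _ _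
    simp only [h4]
    rw [Finset.prod_mul_distrib, ← hP]
    have h5 : ∀ n, ∏ i ∈ Finset.range n, ((T ^ i) v / (T ^ (i + 1)) v) = v / (T ^ n) v := by
      intro n
      induction n with
      | zero => simp [div_self hv]
      | succ n ih =>
        rw [Finset.prod_range_succ, ih]
        have := hne n
        have := hne (n + 1)
        field_simp
    rw [h5, hv']
    have hP0 : P ≠ 0 := by
      intro h
      rw [h, zero_div, zero_mul] at hv'
      exact hne p hv'
    field_simp
  refine ⟨y * v / T v, ?_, hprod⟩
  set w := y * v / T v
  have hw : w ≠ 0 := by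
    intro h
    apply hc
    rw [← hprod, h]
    simp [hp.ne_zero]
  have h6 := congrArg T hprod
  rw [map_prod, hTc] at h6
  simp only [h3'] at h6
  have h7 := Finset.prod_range_succ (fun i => (T ^ i) w) p
  rw [Finset.prod_range_succ', h6, hprod] at h7
  exact (mul_left_cancel₀ hc h7).symm

open Polynomial in
theorem artinSchreier_natDegree {K : Type u} [Field K] (p : ℕ) (hp : p.Prime) (α : K) :
    (X ^ p - X - C α : K[X]).natDegree = p ∧ (X ^ p - X - C α : K[X]).Monic := by
  have h1 : (X + C α : K[X]).degree < p := by
    rw [degree_X_add_C]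
    exact_mod_cast hp.one_lt
  have h2 : (X ^ p - X - C α : K[X]) = X ^ p - (X + C α) := by ring
  rw [h2]
  have h3 : (X ^ p - (X + C α) : K[X]).Monic := monic_X_pow_sub h1
  refine ⟨?_, h3⟩
  apply natDegree_eq_of_degree_eq_some
  rw [degree_sub_eq_left_of_degree_lt (by rwa [degree_X_pow]), degree_X_pow]

open Polynomial in
theorem artinSchreier_irreducible {K : Type u} [Field K] (p : ℕ) (hp : p.Prime) [CharP K p]
    (α : K) (h : ∀ δ : K, δ ^ p - δ ≠ α) : Irreducible (X ^ p - X - C α : K[X]) := by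
  have hpf : Fact p.Prime := ⟨hp⟩
  obtain ⟨hdeg, hmon⟩ := artinSchreier_natDegree p hp α
  rw [hmon.irreducible_iff_natDegree']
  refine ⟨?_, ?_⟩
  · intro h1
    rw [h1, natDegree_one] at hdeg
    exact hp.ne_zero hdeg.symm
  · intro f g hf hg hfg hmem
    rw [hdeg, Finset.mem_Ioc] at hmem
    obtain ⟨hg0, hgp⟩ := hmem
    have hlt : g.natDegree < p := lt_of_le_of_lt hgp (Nat.div_lt_self hp.pos (by norm_num))
    let Ω := AlgebraicClosure K
    have : CharP Ω p := charP_of_injective_algebraMap (algebraMap K Ω).injective p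
    let g' := g.map (algebraMap K Ω)
    have hs : g'.Splits := IsAlgClosed.splits g'
    have hsum := hs.nextCoeff_eq_neg_sum_roots_of_monic (hg.map (algebraMap K Ω))
    rw [nextCoeff_map (algebraMap K Ω).injective] at hsum
    have hcard : Multiset.card g'.roots = g.natDegree := by
      rw [← hs.natDegree_eq_card_roots, natDegree_map]
    have hroot : ∀ r ∈ g'.roots, r ^ p = r + algebraMap K Ω α := by
      intro r hr
      have h1 : aeval r g = 0 := by
        have := (mem_roots'.1 hr).2
        rwa [IsRoot.def, eval_map_algebraMap] at this
      have h2 : aeval r (X ^ p - X - C α : K[X]) = 0 := by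
        rw [← hfg, map_mul, h1, mul_zero]
      simp only [map_sub, map_pow, aeval_X, aeval_C] at h2
      linear_combination h2
    have hpow : g'.roots.sum ^ p = g'.roots.sum + g.natDegree * algebraMap K Ω α := by
      rw [multiset_sum_pow_char, Multiset.map_congr rfl hroot, Multiset.sum_map_add,
        Multiset.map_id', Multiset.map_const', Multiset.sum_replicate, hcard, nsmul_eq_mul]
    have hs' : g'.roots.sum = algebraMap K Ω (-g.nextCoeff) := by rw [map_neg, hsum, neg_neg]
    rw [hs'] at hpow
    have hpow' : (-g.nextCoeff) ^ p = -g.nextCoeff + g.natDegree * α := by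
      apply (algebraMap K Ω).injective
      simpa only [map_pow, map_add, map_mul, map_natCast] using hpow
    have hd : (g.natDegree : K) ≠ 0 := by
      intro h0
      rw [CharP.cast_eq_zero_iff K p] at h0
      exact absurd (Nat.le_of_dvd hg0 h0) (not_le.2 hlt)
    have hdp : (g.natDegree : K) ^ p = g.natDegree := map_natCast (frobenius K p) _
    apply h (-g.nextCoeff / g.natDegree)
    rw [div_pow, hpow', hdp]
    field_simp
    ring

theorem no_root {E C : Type u} [Field E] [Field C] [Algebra E C] (p : ℕ) (hp : p.Prime)
    [CharP C p] (τ : C ≃ₐ[E] C) (hτ : τ ^ p = 1) (β α : C)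
    (hβ : ∑ i ∈ Finset.range p, (τ ^ i) β = 1) (hα : τ α - α = β ^ p - β) (δ : C) :
    δ ^ p - δ ≠ α := by
  have hpf : Fact p.Prime := ⟨hp⟩
  intro hδ
  set ε := τ δ - δ - β with hε
  have h1 : ε ^ p = ε := by
    have h2 : (τ δ) ^ p - τ δ = τ α := by rw [← hδ, map_sub, map_pow]
    rw [hε, sub_pow_char, sub_pow_char]
    linear_combination h2 - hδ + hα
  have h2 : ∀ σ : C ≃ₐ[E] C, σ ε = ε := by
    intro σ
    have hmem := (Subfield.mem_bot_iff_pow_eq_self C p).2 h1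
    have hle : (⊥ : Subfield C) ≤ (RingHom.eqLocusField (σ : C →+* C) (RingHom.id C)) := bot_le
    exact hle hmem
  have h3 : ∀ (k : ℕ) (x : C), (τ ^ k) (τ x) = (τ ^ (k + 1)) x := by
    intro k x; rw [pow_succ]; rfl
  have h4 : ∑ i ∈ Finset.range p, (τ ^ i) ε = 0 := by
    simp only [h2]
    rw [Finset.sum_const, Finset.card_range, nsmul_eq_mul, CharP.cast_eq_zero, zero_mul]
  rw [hε] at h4
  simp only [map_sub, h3] at h4
  rw [Finset.sum_sub_distrib, hβ, Finset.sum_range_sub (fun i => (τ ^ i) δ), hτ] at h4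
  simp at h4

open Polynomial in
theorem exists_cover {E C : Type u} [Field E] [Field C] [Algebra E C]
    (hC : Algebra.IsAlgebraic E C) (p : ℕ) (hp : p.Prime)
    [CharP C p] (τ : C ≃ₐ[E] C) (hτ : τ ^ p = 1) (hτ1 : τ ≠ 1) :
    ∃ (B : Type u) (_ : Field B) (_ : Algebra E B) (j : C →ₐ[E] B) (T : B ≃ₐ[E] B),
      Algebra.IsAlgebraic E B ∧ (∀ x, T (j x) = j (τ x)) ∧ (T ^ p) ^ p = 1 ∧ T ^ p ≠ 1 ∧
      ∀ y, (T ^ p) y = y → ∃ x, j x = y := by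
  have hpf : Fact p.Prime := ⟨hp⟩
  obtain ⟨β, hβ⟩ := exists_trace_one p hp τ hτ hτ1
  have hγ : ∑ i ∈ Finset.range p, (τ ^ i) (β ^ p - β) = 0 := by
    simp only [map_sub, map_pow]
    rw [Finset.sum_sub_distrib, ← sum_pow_char, hβ, one_pow, sub_self]
  obtain ⟨α, hα⟩ := additive90 p τ β hβ _ hγ
  have hirr := artinSchreier_irreducible p hp α (no_root p hp τ hτ β α hβ hα)
  obtain ⟨hdeg, hmon⟩ := artinSchreier_natDegree p hp α
  set f : C[X] := X ^ p - X - Polynomial.C α with hf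
  have hfact : Fact (Irreducible f) := ⟨hirr⟩
  let B := AdjoinRoot f
  have hBp : CharP B p := charP_of_injective_algebraMap (algebraMap C B).injective p
  let j : C →ₐ[E] B := AdjoinRoot.ofAlgHom E f
  let ξ : B := AdjoinRoot.root f
  have hξ : ξ ^ p - ξ - j α = 0 := by
    have h1 : eval₂ (AdjoinRoot.of f) (AdjoinRoot.root f) f = 0 := AdjoinRoot.eval₂_root f
    simp only [hf, eval₂_sub, eval₂_pow, eval₂_X, eval₂_C] at h1
    exact h1
  have hev : eval₂ ((j.comp τ.toAlgHom : C →ₐ[E] B) : C →+* B) (ξ + j β) f = 0 := by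
    simp only [hf, eval₂_sub, eval₂_pow, eval₂_X, eval₂_C]
    change (ξ + j β) ^ p - (ξ + j β) - j (τ α) = 0
    rw [add_pow_char, ← map_pow]
    have h2 : τ α = α + β ^ p - β := by linear_combination hα
    rw [h2, map_sub, map_add]
    linear_combination hξ
  let T₀ : B →ₐ[E] B := AdjoinRoot.liftAlgHom f (j.comp τ.toAlgHom) (ξ + j β) hev
  have hT₀j : ∀ x, T₀ (j x) = j (τ x) := fun x => AdjoinRoot.liftAlgHom_of _ _ _ _ _
  have hT₀ξ : T₀ ξ = ξ + j β := AdjoinRoot.liftAlgHom_root _ _ _ _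
  have hkj : ∀ (k : ℕ) x, (T₀ ^ k) (j x) = j ((τ ^ k) x) := by
    intro k
    induction k with
    | zero => exact fun x => rfl
    | succ k ih =>
      intro x
      rw [pow_succ', pow_succ']
      change T₀ ((T₀ ^ k) (j x)) = j (τ ((τ ^ k) x))
      rw [ih, hT₀j]
  have hkξ : ∀ (k : ℕ), (T₀ ^ k) ξ = ξ + j (∑ i ∈ Finset.range k, (τ ^ i) β) := by
    intro k
    induction k with
    | zero => simp
    | succ k ih =>
      rw [pow_succ]
      change (T₀ ^ k) (T₀ ξ) = _
      rw [hT₀ξ, map_add, ih, hkj, Finset.sum_range_succ, map_add, add_assoc]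
  have hpξ : (T₀ ^ p) ξ = ξ + 1 := by rw [hkξ, hβ, map_one]
  have hpj : ∀ x, (T₀ ^ p) (j x) = j x := by
    intro x
    rw [hkj, hτ]
    rfl
  have hppξ : ∀ k : ℕ, ((T₀ ^ p) ^ k) ξ = ξ + k := by
    intro k
    induction k with
    | zero => simp
    | succ k ih =>
      rw [pow_succ]
      change ((T₀ ^ p) ^ k) ((T₀ ^ p) ξ) = _
      rw [hpξ, map_add, ih, map_one]
      push_cast
      ring
  have hppj : ∀ (k : ℕ) x, ((T₀ ^ p) ^ k) (j x) = j x := by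
    intro k
    induction k with
    | zero => exact fun x => rfl
    | succ k ih =>
      intro x
      rw [pow_succ]
      change ((T₀ ^ p) ^ k) ((T₀ ^ p) (j x)) = _
      rw [hpj, ih]
  have hone : (T₀ ^ p) ^ p = 1 := by
    apply AdjoinRoot.algHom_ext'
    · ext x
      exact hppj p x
    · change ((T₀ ^ p) ^ p) ξ = ξ
      rw [hppξ, CharP.cast_eq_zero, add_zero]
  have hbij : Function.Bijective T₀ := by
    refine ⟨T₀.toRingHom.injective, fun y => ?_⟩
    have hpos : 0 < p * p := Nat.mul_pos hp.pos hp.pos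
    refine ⟨(T₀ ^ (p * p - 1)) y, ?_⟩
    change (T₀ * T₀ ^ (p * p - 1)) y = y
    rw [← pow_succ', Nat.sub_add_cancel hpos, pow_mul, hone]
    rfl
  let T : B ≃ₐ[E] B := AlgEquiv.ofBijective T₀ hbij
  have hTk : ∀ (k : ℕ) x, (T ^ k) x = (T₀ ^ k) x := by
    intro k
    induction k with
    | zero => exact fun x => rfl
    | succ k ih =>
      intro x
      rw [pow_succ', pow_succ']
      change T₀ ((T ^ k) x) = T₀ ((T₀ ^ k) x)
      rw [ih]
  have hTp : (T ^ p) ^ p = 1 := by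
    ext x
    rw [← pow_mul, hTk, pow_mul, hone]
    rfl
  let S : B ≃ₐ[C] B := AlgEquiv.ofRingEquiv (f := (T ^ p).toRingEquiv) (by
    intro x
    change (T ^ p) (j x) = j x
    rw [hTk, hpj])
  have hS : ∀ x, S x = (T ^ p) x := fun x => rfl
  have hSk : ∀ (k : ℕ) x, (S ^ k) x = ((T ^ p) ^ k) x := by
    intro k
    induction k with
    | zero => exact fun x => rfl
    | succ k ih =>
      intro x
      rw [pow_succ', pow_succ']
      change S ((S ^ k) x) = (T ^ p) (((T ^ p) ^ k) x)
      rw [ih, hS]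
  have hSp : S ^ p = 1 := by
    ext x
    rw [hSk, hTp]
    rfl
  have hSξ : S ξ ≠ ξ := by
    rw [hS, hTk, hpξ]
    simp
  have hS1 : S ≠ 1 := by
    intro h
    exact hSξ (by rw [h]; rfl)
  have hord : orderOf S = p := orderOf_eq_prime hSp hS1
  have hfinB : FiniteDimensional C B := (AdjoinRoot.powerBasis hmon.ne_zero).finite
  have hrank : Module.finrank C B = p := by
    rw [(AdjoinRoot.powerBasis hmon.ne_zero).finrank, AdjoinRoot.powerBasis_dim, hdeg]
  let M := IntermediateField.fixedField (Subgroup.zpowers S)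
  have hM : Module.finrank M B = p := by
    rw [IntermediateField.finrank_fixedField_eq_card, Nat.card_zpowers, hord]
  have hMbot : M = ⊥ := by
    rw [← IntermediateField.finrank_eq_one_iff]
    have h := Module.finrank_mul_finrank C M B
    rw [hM, hrank] at h
    exact Nat.eq_of_mul_eq_mul_right hp.pos (by rw [h, one_mul])
  refine ⟨B, inferInstance, inferInstance, j, T, ?_, hT₀j, hTp, ?_, ?_⟩
  · exact Algebra.IsAlgebraic.trans E C B
  · intro h
    apply hSξ
    rw [hS, h]
    rfl
  · intro y hy
    have hyM : y ∈ M := by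
      rw [IntermediateField.mem_fixedField_iff]
      intro g hg
      have hle : Subgroup.zpowers S ≤ MulAction.stabilizer (B ≃ₐ[C] B) y := by
        rw [Subgroup.zpowers_le]
        exact hy
      exact hle hg
    rw [hMbot, IntermediateField.mem_bot] at hyM
    exact hyM

theorem norm_step {E : Type u} [Field E] (p : ℕ) (hp : p.Prime) [CharP E p] (n : ℕ)
    (IH : ∀ (C : Type u) [Field C] [Algebra E C], Algebra.IsAlgebraic E C → ∀ τ : C ≃ₐ[E] C,
      τ ^ p = 1 → τ ≠ 1 → ∀ c : C, c ≠ 0 → τ c = c → IsSeparable E (c ^ p ^ n) →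
        ∃ y : C, IsSeparable E (y ^ p ^ n) ∧ ∏ i ∈ Finset.range p, (τ ^ i) y = c)
    {C : Type u} [Field C] [Algebra E C] (hC : Algebra.IsAlgebraic E C) (τ : C ≃ₐ[E] C)
    (hτ : τ ^ p = 1) (hτ1 : τ ≠ 1) (c : C) (hc : c ≠ 0) (hτc : τ c = c)
    (hcs : IsSeparable E (c ^ p ^ (n + 1))) :
    ∃ y : C, ∏ i ∈ Finset.range p, (τ ^ i) y = c := by
  have hpf : Fact p.Prime := ⟨hp⟩
  have : CharP C p := charP_of_injective_algebraMap (algebraMap E C).injective p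
  obtain ⟨z, hzs, hz⟩ := IH C hC τ hτ hτ1 (c ^ p) (pow_ne_zero _ hc) (by rw [map_pow, hτc])
    (by rw [← pow_mul, ← pow_succ']; exact hcs)
  obtain ⟨B, _, _, j, T, hB, hTj, hTp, hTp1, hfix⟩ := exists_cover hC p hp τ hτ hτ1
  have hTk : ∀ (k : ℕ) x, (T ^ k) (j x) = j ((τ ^ k) x) := by
    intro k
    induction k with
    | zero => exact fun x => rfl
    | succ k ih =>
      intro x
      rw [pow_succ', pow_succ']
      change T ((T ^ k) (j x)) = j (τ ((τ ^ k) x))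
      rw [ih, hTj]
  have hjinj : Function.Injective j := j.toRingHom.injective
  have hz0 : z ≠ 0 := by
    intro h
    rw [h] at hz
    simp only [map_zero, Finset.prod_const, Finset.card_range] at hz
    rw [zero_pow hp.ne_zero] at hz
    exact pow_ne_zero p hc hz.symm
  have hprodj : ∀ x, ∏ i ∈ Finset.range p, (T ^ i) (j x)
      = j (∏ i ∈ Finset.range p, (τ ^ i) x) := by
    intro x
    rw [map_prod]
    simp only [hTk]
  obtain ⟨y, -, hy⟩ := IH B hB (T ^ p) hTp hTp1 (j z) ((map_ne_zero_iff j hjinj).2 hz0)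
    (by rw [hTk, hτ]; rfl) (by rw [← map_pow]; exact hzs.map j hjinj)
  obtain ⟨w, hw, hw'⟩ := cover_trick p hp T hTp hTp1 (j c) (j z) y
    ((map_ne_zero_iff j hjinj).2 hc) (by rw [hTj, hτc]) (by rw [hprodj, hz, map_pow]) hy
  obtain ⟨x, rfl⟩ := hfix w hw
  refine ⟨x, hjinj ?_⟩
  rw [← hprodj, hw']

theorem isSeparable_coe_pow {E C : Type u} [Field E] [Field C] [Algebra E C]
    (M : IntermediateField E C) (x : M) (k : ℕ) (h : IsSeparable E ((x : C) ^ k)) :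
    IsSeparable E (x ^ k) := by
  have h2 : M.val (x ^ k) = (x : C) ^ k := map_pow M.val _ _
  have h1 : minpoly E (M.val (x ^ k)) = minpoly E (x ^ k) :=
    minpoly.algHom_eq M.val M.val.injective _
  rw [h2] at h1
  unfold IsSeparable at h ⊢
  rwa [← h1]

theorem exists_field_pow_separable {E C : Type u} [Field E] [Field C] [Algebra E C]
    (p : ℕ) [ExpChar C p] (n : ℕ) :
    ∃ M : IntermediateField E C, ∀ x, x ∈ M ↔ IsSeparable E (x ^ p ^ n) := by
  let S : Subfield C := (separableClosure E C).toSubfield.comap (iterateFrobenius C p n)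
  have hS : ∀ x, x ∈ S ↔ x ^ p ^ n ∈ separableClosure E C := by
    intro x
    have h : x ∈ S ↔ iterateFrobenius C p n x ∈ separableClosure E C := Iff.rfl
    rwa [iterateFrobenius_def] at h
  have hE : ∀ x : E, algebraMap E C x ∈ S := by
    intro x
    rw [hS, ← map_pow]
    exact algebraMap_mem _ _
  refine ⟨S.toIntermediateField hE, fun x => ?_⟩
  have h : x ∈ S.toIntermediateField hE ↔ x ∈ S := Iff.rfl
  rw [h, hS, mem_separableClosure_iff]

theorem norm_char {E : Type u} [Field E] (p : ℕ) (hp : p.Prime) (H : NormTop E p)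
    [CharP E p] (n : ℕ) :
    ∀ (C : Type u) [Field C] [Algebra E C], Algebra.IsAlgebraic E C → ∀ τ : C ≃ₐ[E] C,
      τ ^ p = 1 → τ ≠ 1 → ∀ c : C, c ≠ 0 → τ c = c → IsSeparable E (c ^ p ^ n) →
        ∃ y : C, IsSeparable E (y ^ p ^ n) ∧ ∏ i ∈ Finset.range p, (τ ^ i) y = c := by
  have hpf : Fact p.Prime := ⟨hp⟩
  induction n with
  | zero =>
    intro C _ _ hC τ hτ hτ1 c hc hτc hcs
    simp only [pow_zero, pow_one] at hcs ⊢
    exact norm_sep p hp H hC τ hτ hτ1 c hc hτc hcs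
  | succ n IH =>
    intro C _ _ hC τ hτ hτ1 c hc hτc hcs
    have : CharP C p := charP_of_injective_algebraMap (algebraMap E C).injective p
    obtain ⟨M, hMmem⟩ := exists_field_pow_separable (E := E) (C := C) p (n + 1)
    have hM : ∀ x ∈ M, τ x ∈ M := by
      intro x hx
      rw [hMmem] at hx ⊢
      rw [← map_pow]
      exact hx.map τ.toAlgHom τ.injective
    obtain ⟨σ, hσ, hσp⟩ := exists_restrict p hp τ hτ M hM
    obtain ⟨x, hxs, hx⟩ := exists_separable_moved hC τ hτ1
    have hxM : x ∈ M := by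
      rw [hMmem]
      exact mem_separableClosure_iff.1 (pow_mem (mem_separableClosure_iff.2 hxs) _)
    have hσ1 : σ ≠ 1 := by
      intro h
      apply hx
      have := hσ 1 ⟨x, hxM⟩
      rw [h] at this
      simpa using this.symm
    obtain ⟨c', rfl⟩ : ∃ c' : M, (c' : C) = c := ⟨⟨c, (hMmem c).2 hcs⟩, rfl⟩
    have hσc : σ c' = c' := by
      apply Subtype.ext
      have := hσ 1 c'
      simpa only [pow_one, hτc] using this
    obtain ⟨y, hy⟩ := norm_step p hp n IH (C := M) inferInstance σ hσp hσ1 c' (by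
      intro h
      exact hc (congrArg (fun t : M => (t : C)) h)) hσc (isSeparable_coe_pow M c' _ hcs)
    refine ⟨y, (hMmem y).1 y.2, ?_⟩
    have h4 : M.val _ = M.val _ := congrArg M.val hy
    rw [map_prod] at h4
    exact (Finset.prod_congr rfl fun i _ => (hσ i y).symm).trans h4

theorem ns_of_normTop {E : Type u} [Field E] (p : ℕ) (hp : p.Prime) (H : NormTop E p) :
    NS E p := by
  obtain ⟨q, hq⟩ := ExpChar.exists E
  by_cases hqp : q = p
  · subst hqp
    have hpf : Fact q.Prime := ⟨hp⟩
    have : CharP E q := by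
      cases hq with
      | zero => exact absurd hp Nat.not_prime_one
      | prime _ => assumption
    intro C _ _ hC τ hτ hτ1 c hc hτc
    obtain ⟨n, hn⟩ := exists_pow_separable q hC c
    obtain ⟨y, -, hy⟩ := norm_char q hp H n C hC τ hτ hτ1 c hc hτc hn
    exact ⟨y, hy⟩
  · apply norm_coprime p hp H q
    rcases expChar_is_prime_or_one E q with h | h
    · exact (Nat.coprime_primes h hp).2 hqp
    · rw [h]; exact Nat.coprime_one_left p

theorem stmt_19 {E : Type u} [Field E] (p : ℕ) (hp : p.Prime)
    (F : Type u) [Field F] [Algebra E F] (hFalg : Algebra.IsAlgebraic E F)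
    (hBr : ¬ BrauerPComponentTrivial F p) :
    ∃ F₁ : IntermediateField E (AlgebraicClosure E),
      ∃ F₂ : IntermediateField F₁ (AlgebraicClosure E),
        FiniteDimensional E F₁ ∧ Algebra.IsSeparable E F₁ ∧
        Module.finrank F₁ F₂ = p ∧ IsGalois F₁ F₂ ∧ IsCyclic (F₂ ≃ₐ[F₁] F₂) ∧
        normGroup F₁ F₂ ≠ ⊤ := by
  by_contra hcon
  have H : NormTop E p := by
    intro F₁ F₂ h1 h2 h3 h4 h5
    by_contra h6
    exact hcon ⟨F₁, F₂, h1, h2, h3, h4, h5, h6⟩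
  have hNS : NS F p := (ns_of_normTop p hp H).trans hFalg
  apply hBr
  intro D _ _ hcen hfin hk
  exact triv_all p hp _ F D hNS hcen hfin rfl hk
end
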